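/- For every real μ > 4·ln 2 there exist a constant c > 0 and N ∈ ℕ such that for all n ≥ N divisible by 6, setting β* = μ/n, the Metropolis chain on Ω_RGB at inverse temperature β* has mixing time τ(ε) ≤ n^c·(w_{β*}(n/3, n/3, n/3) / w_{β*}(t_min, (n−t_min)/2, (n−t_min)/2))·(1 + ln(1/ε)) for all ε ∈ (0,1), where t_min is the minimizer, over integers t with n/3 ≤ t ≤ n and n−t even, of t ↦ w_{β*}(t, (n−t)/2, (n−t)/2). -/

import Mathlib

/-!
The bound follows from a Poincaré inequality for the Metropolis chain whose constant is
`R = w(n/3, n/3, n/3) / w(t_min, …)` times a polynomial in `n`. The chain holds with probability at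
least `1/3`, and every stationary mass is at least `exp (-O(n))`, so such an inequality bounds the
mixing time (`mixingTime_le_of_poincare`).

The Poincaré inequality is obtained on color classes, the sets of configurations with given color
counts `a ≥ b ≥ c`. The total Gibbs mass of a class is proportional to `pottsWeight`. Let `s(a, b, c)`
be the root mean square deviation of a function from a constant `m` on the class. Recoloring a
random vertex moves a uniform configuration of one class to a uniform configuration of a
neighboring class, and changes the Gibbs factor by at most `exp (β n) = exp μ`. By Minkowski's
inequality `s` changes in such a move by at most the square root of (polynomial × Dirichlet form /
weight of the class), see `sliceDev_le_of_move`. It remains to join every class to one root class by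
a path of polynomial length whose weights never fall below the starting weight divided by
`(n + 1) R` (`path_to_root`):

* While the second count `b` exceeds the third, either recoloring from the second to the first color
  (if `β b ≥ 1`) or from the second to the third color (if `β b ≤ 1`) does not decrease the weight.
  This leads to the balanced line `(k + 2j, k - j, k - j)`, where `n = 3k`
  (`path_to_diagonal`).
* On the balanced line the weight decreases, then increases, then decreases
  (`diagWeight_no_valley`), because the derivative of the logarithm of its successive ratios is
  concave. On the way to its maximum the weight thus loses at most the factor `R`.

The root is the class `(k + 2j + 1, k - j, k - j - 1)` next to the heaviest balanced class. Its counts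
are strictly decreasing, so the swap of the colors of two sites factors through two recolorings
inside `Ω_RGB` (`mergeSites`). Since any rearrangement is a product of at most `n` swaps, the
deviation on the root class is controlled as well, for `m` the average over the root class
(`exists_center_of_strict`).
-/

open Finset

noncomputable section

/-- The mixing time of a Markov chain with transition matrix `P` and target
distribution `π`: the least `t` such that for all `t' ≥ t` the total variation
distance of the `t'`-step distribution from `π` is at most `ε`, from every start. -/
noncomputable def mixingTime {S : Type} [Fintype S] [DecidableEq S]
    (P : Matrix S S ℝ) (π : S → ℝ) (ε : ℝ) : ℕ :=
  sInf {t : ℕ | ∀ t' : ℕ, t ≤ t' → ∀ x : S,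
    (1/2) * ∑ y : S, |(P ^ t') x y - π y| ≤ ε}

/-- The Metropolis chain with proposal kernel `Q` and target distribution `π`. -/
noncomputable def metropolis {S : Type} [Fintype S] [DecidableEq S]
    (Q : S → S → ℝ) (π : S → ℝ) : Matrix S S ℝ :=
  Matrix.of fun x y =>
    if y = x then 1 - ∑ z ∈ Finset.univ.erase x, Q x z * min 1 (π z / π x)
    else Q x y * min 1 (π y / π x)

/-- Off-diagonal transition rates of the simulated tempering chain. -/
noncomputable def temperingOff {S : Type} [Fintype S] [DecidableEq S] {M : ℕ}
    (Mk : Fin (M+1) → Matrix S S ℝ) (π : Fin (M+1) → S → ℝ)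
    (p q : S × Fin (M+1)) : ℝ :=
  (if q.2 = p.2 then (1/2) * Mk p.2 p.1 q.1 else 0) +
  (if q.1 = p.1 ∧ ((q.2 : ℕ) = (p.2 : ℕ) + 1 ∨ (q.2 : ℕ) + 1 = (p.2 : ℕ)) then
    (1/4) * min 1 (π q.2 p.1 / π p.2 p.1) else 0)

/-- The simulated tempering chain built from level Metropolis kernels `Mk` and
the tempering distributions `π`. -/
noncomputable def temperingChain {S : Type} [Fintype S] [DecidableEq S] {M : ℕ}
    (Mk : Fin (M+1) → Matrix S S ℝ) (π : Fin (M+1) → S → ℝ) :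
    Matrix (S × Fin (M+1)) (S × Fin (M+1)) ℝ :=
  Matrix.of fun p q =>
    if q = p then 1 - ∑ r ∈ Finset.univ.erase p, temperingOff Mk π p r
    else temperingOff Mk π p q

/-- Conductance of a chain `(P, π)`. -/
noncomputable def conductance {S : Type} [Fintype S] [DecidableEq S]
    (P : Matrix S S ℝ) (π : S → ℝ) : ℝ :=
  sInf {r : ℝ | ∃ A : Finset S, 0 < ∑ x ∈ A, π x ∧ (∑ x ∈ A, π x) ≤ 1/2 ∧
    r = (∑ x ∈ A, ∑ y ∈ Aᶜ, π x * P x y) / ∑ x ∈ A, π x}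

/-- Potts Hamiltonian. -/
def pottsH (n : ℕ) (x : Fin n → Fin 3) : ℕ :=
  (Finset.univ.filter (fun p : Fin n × Fin n => p.1 < p.2 ∧ x p.1 = x p.2)).card

/-- Gibbs distribution of the mean-field 3-state Potts model. -/
noncomputable def pottsGibbs (n : ℕ) (β : ℝ) (x : Fin n → Fin 3) : ℝ :=
  Real.exp (β * pottsH n x) / ∑ y : Fin n → Fin 3, Real.exp (β * pottsH n y)

/-- Proposal: recolor a uniformly random vertex with a uniformly random color. -/
noncomputable def pottsProp (n : ℕ) (x y : Fin n → Fin 3) : ℝ :=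
  ((Finset.univ.filter
    (fun vc : Fin n × Fin 3 => Function.update x vc.1 vc.2 = y)).card : ℝ) / (n * 3)


/-- Number of vertices of color `j`. -/
def colorCount (n : ℕ) (x : Fin n → Fin 3) (j : Fin 3) : ℕ :=
  (Finset.univ.filter (fun i => x i = j)).card

/-- The restricted state space `Ω_RGB = {x : σ₁(x) ≥ σ₂(x) ≥ σ₃(x)}`. -/
def RGBset (n : ℕ) : Finset (Fin n → Fin 3) :=
  Finset.univ.filter
    (fun x => colorCount n x 1 ≤ colorCount n x 0 ∧ colorCount n x 2 ≤ colorCount n x 1)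

/-- The Gibbs distribution at inverse temperature `β`, normalized on `Ω_RGB`. -/
noncomputable def gibbsRGB (n : ℕ) (β : ℝ) (x : ↥(RGBset n)) : ℝ :=
  Real.exp (β * pottsH n (x : Fin n → Fin 3)) /
    ∑ y : ↥(RGBset n), Real.exp (β * pottsH n (y : Fin n → Fin 3))

/-- The recoloring proposal restricted to `Ω_RGB` (moves leaving `Ω_RGB` are
rejected, contributing to the holding probability of the Metropolis chain). -/
noncomputable def propRGB (n : ℕ) (a b : ↥(RGBset n)) : ℝ :=
  pottsProp n (a : Fin n → Fin 3) (b : Fin n → Fin 3)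


/-- Mean-field 3-state Potts weight of the class with color counts `σ`:
`w_β(σ) = (n!/(σ₁!·σ₂!·σ₃!))·exp((β/2)(σ₁²+σ₂²+σ₃²))`. -/
noncomputable def pottsWeight (n : ℕ) (β : ℝ) (σ : ℕ × ℕ × ℕ) : ℝ :=
  ((n.factorial : ℝ) /
      ((σ.1.factorial : ℝ) * (σ.2.1.factorial : ℝ) * (σ.2.2.factorial : ℝ))) *
    Real.exp ((β / 2) * ((σ.1 : ℝ) ^ 2 + (σ.2.1 : ℝ) ^ 2 + (σ.2.2 : ℝ) ^ 2))

/-- The integers `t` with `n/3 ≤ t ≤ n` and `n − t` even: the admissible first color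
counts along the line of equal blue and green counts. -/
def tCandidates (n : ℕ) : Finset ℕ :=
  (Finset.Icc (n / 3) n).filter (fun t => 2 ∣ (n - t))

end

/-! ### From a Poincaré inequality to mixing -/

/-- One step of a chain with holding probability at least `1/3` decreases the second moment by a
fixed fraction of the Dirichlet form. No reversibility is needed. -/
lemma variance_contraction {S : Type} [Fintype S] [DecidableEq S]
    (P : Matrix S S ℝ) (π : S → ℝ) (hπ : ∀ x, 0 < π x)
    (hP : ∀ x y, 0 ≤ P x y) (hrow : ∀ x, ∑ y, P x y = 1)
    (hstat : ∀ y, ∑ x, π x * P x y = π y) (hdiag : ∀ x, 1 / 3 ≤ P x x) (f : S → ℝ) :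
    ∑ x, π x * (P.mulVec f x) ^ 2 ≤
      ∑ x, π x * f x ^ 2 - 1 / 3 * ∑ x, ∑ y, π x * P x y * (f x - f y) ^ 2 := by
  have key : ∀ x, (P.mulVec f x) ^ 2 ≤
      ∑ y, P x y * f y ^ 2 - 1 / 3 * ∑ y, P x y * (f x - f y) ^ 2 := by
    intro x
    set a := f x with ha
    -- Cauchy–Schwarz off the diagonal, where the total mass is at most `2/3`
    have hcs : (∑ y, P x y * (f y - a)) ^ 2 ≤ 2 / 3 * ∑ y, P x y * (a - f y) ^ 2 := by
      have h1 : ∑ y, P x y * (f y - a) = ∑ y ∈ univ.erase x, P x y * (f y - a) := by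
        rw [← Finset.add_sum_erase univ _ (mem_univ x)]; simp [ha]
      have h2 : ∑ y, P x y * (a - f y) ^ 2 = ∑ y ∈ univ.erase x, P x y * (a - f y) ^ 2 := by
        rw [← Finset.add_sum_erase univ _ (mem_univ x)]; simp [ha]
      have h3 : ∑ y ∈ univ.erase x, P x y ≤ 2 / 3 := by
        have := Finset.add_sum_erase univ (fun y => P x y) (mem_univ x)
        simp only [hrow] at this
        linarith [hdiag x]
      rw [h1, h2]
      calc (∑ y ∈ univ.erase x, P x y * (f y - a)) ^ 2
          ≤ (∑ y ∈ univ.erase x, P x y) * ∑ y ∈ univ.erase x, P x y * (a - f y) ^ 2 := by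
            apply Finset.sum_sq_le_sum_mul_sum_of_sq_le_mul
            · intro i _; exact hP x i
            · intro i _; exact mul_nonneg (hP x i) (sq_nonneg _)
            · intro i _; exact le_of_eq (by ring)
        _ ≤ _ := by
            apply mul_le_mul_of_nonneg_right h3
            exact Finset.sum_nonneg fun i _ => mul_nonneg (hP x i) (sq_nonneg _)
    have e1 : ∑ y, P x y * (f y - a) = P.mulVec f x - a := by
      simp only [mul_sub, Finset.sum_sub_distrib, ← Finset.sum_mul, hrow, Matrix.mulVec,
        dotProduct, one_mul]
    have e2 : ∑ y, P x y * (a - f y) ^ 2 =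
        a ^ 2 - 2 * a * P.mulVec f x + ∑ y, P x y * f y ^ 2 := by
      have : ∀ y, P x y * (a - f y) ^ 2 =
          P x y * a ^ 2 - 2 * a * (P x y * f y) + P x y * f y ^ 2 := fun y => by ring
      simp only [this, Finset.sum_add_distrib, Finset.sum_sub_distrib, ← Finset.sum_mul, hrow,
        ← Finset.mul_sum, Matrix.mulVec, dotProduct, one_mul]
    rw [e1] at hcs
    nlinarith
  have h := Finset.sum_le_sum fun x (_ : x ∈ univ) =>
    mul_le_mul_of_nonneg_left (key x) (hπ x).le
  refine h.trans (le_of_eq ?_)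
  simp only [mul_sub, Finset.sum_sub_distrib]
  congr 1
  · simp only [Finset.mul_sum]
    rw [Finset.sum_comm]
    refine Finset.sum_congr rfl fun y _ => ?_
    simp only [← mul_assoc]
    rw [← Finset.sum_mul, hstat]
  · simp only [Finset.mul_sum]
    refine Finset.sum_congr rfl fun x _ => Finset.sum_congr rfl fun y _ => by ring

/-- A Poincaré inequality with constant `K` makes the variance decay geometrically at rate of order
`1/K`; duality and the lower bound `exp (-Λ)` on the stationary masses turn this into a bound on the
mixing time. -/
lemma mixingTime_le_of_poincare {S : Type} [Fintype S] [DecidableEq S]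
    (P : Matrix S S ℝ) (π : S → ℝ) (hπ : ∀ x, 0 < π x) (hsum : ∑ x, π x = 1)
    (hP : ∀ x y, 0 ≤ P x y) (hrow : ∀ x, ∑ y, P x y = 1)
    (hstat : ∀ y, ∑ x, π x * P x y = π y) (hdiag : ∀ x, 1 / 3 ≤ P x x)
    (K : ℝ) (hK : 1 ≤ K)
    (hpoin : ∀ f : S → ℝ, ∃ m : ℝ, ∑ x, π x * (f x - m) ^ 2 ≤
      K * ∑ x, ∑ y, π x * P x y * (f x - f y) ^ 2)
    (Λ : ℝ) (hΛ : 0 ≤ Λ) (hmin : ∀ x, Real.exp (-Λ) ≤ π x) (ε : ℝ) (hε : 0 < ε) (hε1 : ε < 1) :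
    (mixingTime P π ε : ℝ) ≤ 3 * K * (2 * Real.log (1 / ε) + Λ) + 1 := by
  set κ : ℝ := 1 / (3 * K) with hκ
  have hκ0 : 0 < κ := by positivity
  have hκ1 : κ ≤ 1 := by
    rw [hκ, div_le_one (by positivity)]; linarith
  have mean : ∀ f : S → ℝ, ∑ x, π x * P.mulVec f x = ∑ x, π x * f x := by
    intro f
    simp only [Matrix.mulVec, dotProduct, Finset.mul_sum]
    rw [Finset.sum_comm]
    refine Finset.sum_congr rfl fun y _ => ?_
    simp only [← mul_assoc]
    rw [← Finset.sum_mul, hstat]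
  have step : ∀ f : S → ℝ, ∑ x, π x * f x = 0 →
      ∑ x, π x * (P.mulVec f x) ^ 2 ≤ (1 - κ) * ∑ x, π x * f x ^ 2 := by
    intro f hf
    obtain ⟨m, hm⟩ := hpoin f
    have h1 : ∑ x, π x * f x ^ 2 ≤ ∑ x, π x * (f x - m) ^ 2 := by
      have : ∀ x, π x * (f x - m) ^ 2 = π x * f x ^ 2 - 2 * m * (π x * f x) + π x * m ^ 2 :=
        fun x => by ring
      simp only [this, Finset.sum_add_distrib, Finset.sum_sub_distrib, ← Finset.mul_sum,
        ← Finset.sum_mul, hf, hsum]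
      nlinarith [sq_nonneg m]
    have h2 := variance_contraction P π hπ hP hrow hstat hdiag f
    set D := ∑ x, ∑ y, π x * P x y * (f x - f y) ^ 2
    have h3 : κ * ∑ x, π x * f x ^ 2 ≤ 1 / 3 * D := by
      have : κ * (K * D) = 1 / 3 * D := by rw [hκ]; field_simp
      rw [← this]
      exact mul_le_mul_of_nonneg_left (h1.trans hm) hκ0.le
    linarith
  have iter : ∀ (t : ℕ) (f : S → ℝ), ∑ x, π x * f x = 0 →
      ∑ x, π x * ((P ^ t).mulVec f x) ^ 2 ≤ (1 - κ) ^ t * ∑ x, π x * f x ^ 2 := by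
    intro t
    induction t with
    | zero => intro f _; simp
    | succ t ih =>
      intro f hf
      have h1 := ih (P.mulVec f) (by rw [mean, hf])
      rw [Matrix.mulVec_mulVec, ← pow_succ] at h1
      refine h1.trans ?_
      rw [pow_succ, mul_assoc]
      exact mul_le_mul_of_nonneg_left (step f hf) (pow_nonneg (by linarith) _)
  have rowt : ∀ t x, ∑ y, (P ^ t) x y = 1 := by
    intro t
    induction t with
    | zero => intro x; simp [Matrix.one_apply]
    | succ t ih =>
      intro x
      simp only [pow_succ, Matrix.mul_apply]
      rw [Finset.sum_comm]
      simp only [← Finset.mul_sum, hrow, mul_one, ih]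
  -- duality: test against the sign function
  have tv : ∀ t x, (∑ y, |(P ^ t) x y - π y|) ^ 2 * π x ≤ (1 - κ) ^ t := by
    intro t x
    set φ : S → ℝ := fun y => if 0 ≤ (P ^ t) x y - π y then 1 else -1 with hφ
    have hφ2 : ∀ y, φ y ^ 2 = 1 := by intro y; simp only [hφ]; split_ifs <;> norm_num
    set m := ∑ y, π y * φ y with hm
    have h0 : ∑ y, π y * (φ y - m) = 0 := by
      simp only [mul_sub, Finset.sum_sub_distrib, ← Finset.sum_mul, hsum, ← hm]; ring
    have h1 := iter t (fun y => φ y - m) h0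
    have hv : ∑ y, π y * (φ y - m) ^ 2 ≤ 1 := by
      have : ∀ y, π y * (φ y - m) ^ 2 = π y * φ y ^ 2 - 2 * m * (π y * φ y) + π y * m ^ 2 :=
        fun x => by ring
      simp only [this, Finset.sum_add_distrib, Finset.sum_sub_distrib, ← Finset.mul_sum,
        ← Finset.sum_mul, hφ2, mul_one, hsum, ← hm]
      nlinarith [sq_nonneg m]
    have h2 : (P ^ t).mulVec (fun y => φ y - m) x = ∑ y, |(P ^ t) x y - π y| := by
      simp only [Matrix.mulVec, dotProduct, mul_sub, Finset.sum_sub_distrib, ← Finset.sum_mul,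
        rowt, one_mul]
      rw [hm, ← Finset.sum_sub_distrib]
      refine Finset.sum_congr rfl fun y _ => ?_
      simp only [hφ]
      split_ifs with h
      · rw [abs_of_nonneg h]; ring
      · rw [abs_of_neg (not_le.mp h)]; ring
    have h3 : π x * ((P ^ t).mulVec (fun y => φ y - m) x) ^ 2 ≤
        ∑ y, π y * ((P ^ t).mulVec (fun y => φ y - m) y) ^ 2 :=
      Finset.single_le_sum (f := fun y => π y * ((P ^ t).mulVec (fun y => φ y - m) y) ^ 2)
        (fun y _ => mul_nonneg (hπ y).le (sq_nonneg _)) (mem_univ x)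
    rw [h2] at h3
    have h4 : (1 - κ) ^ t * ∑ y, π y * (φ y - m) ^ 2 ≤ (1 - κ) ^ t * 1 :=
      mul_le_mul_of_nonneg_left hv (pow_nonneg (by linarith) _)
    linarith
  set T : ℝ := 3 * K * (2 * Real.log (1 / ε) + Λ) with hT
  have hlog : 0 ≤ Real.log (1 / ε) := Real.log_nonneg (by rw [le_div_iff₀ hε]; linarith)
  have hT0 : 0 ≤ T := by positivity
  have hmem : ⌈T⌉₊ ∈ {t : ℕ | ∀ t' : ℕ, t ≤ t' → ∀ x : S,
      (1/2) * ∑ y : S, |(P ^ t') x y - π y| ≤ ε} := by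
    intro t ht x
    have hTt : T ≤ t := (Nat.le_ceil T).trans (by exact_mod_cast ht)
    have h1 : (1 - κ) ^ t ≤ Real.exp (-(κ * t)) := by
      calc (1 - κ) ^ t ≤ (Real.exp (-κ)) ^ t :=
            pow_le_pow_left₀ (by linarith) (Real.one_sub_le_exp_neg κ) t
        _ = _ := by rw [← Real.exp_nat_mul]; congr 1; ring
    have h2 : 2 * Real.log (1 / ε) + Λ ≤ κ * t := by
      have : κ * T = 2 * Real.log (1 / ε) + Λ := by rw [hT, hκ]; field_simp
      rw [← this]
      exact mul_le_mul_of_nonneg_left hTt hκ0.le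
    have h3 : Real.exp (-(κ * t)) ≤ ε ^ 2 * Real.exp (-Λ) := by
      have : ε ^ 2 = Real.exp (-(2 * Real.log (1 / ε))) := by
        rw [one_div, Real.log_inv, mul_neg, neg_neg, mul_comm, Real.exp_mul,
          Real.exp_log hε]
        norm_cast
      rw [this, ← Real.exp_add]
      exact Real.exp_le_exp.mpr (by linarith)
    have h4 : (∑ y, |(P ^ t) x y - π y|) ^ 2 * π x ≤ ε ^ 2 * π x :=
      ((tv t x).trans (h1.trans h3)).trans
        (mul_le_mul_of_nonneg_left (hmin x) (sq_nonneg ε))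
    have h5 := le_of_mul_le_mul_right h4 (hπ x)
    have h6 := abs_le_of_sq_le_sq h5 hε.le
    have := le_abs_self (∑ y, |(P ^ t) x y - π y|)
    linarith
  have : mixingTime P π ε ≤ ⌈T⌉₊ := Nat.sInf_le hmem
  calc (mixingTime P π ε : ℝ) ≤ (⌈T⌉₊ : ℝ) := by exact_mod_cast this
    _ ≤ T + 1 := (Nat.ceil_lt_add_one hT0).le

/-! ### The weight landscape on the simplex of color counts -/

lemma pottsWeight_pos (n : ℕ) (β : ℝ) (σ : ℕ × ℕ × ℕ) : 0 < pottsWeight n β σ := by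
  unfold pottsWeight; positivity

lemma pottsWeight_move01 (n : ℕ) (β : ℝ) (a b c : ℕ) :
    pottsWeight n β (a + 1, b, c) * (a + 1) =
      pottsWeight n β (a, b + 1, c) * ((b + 1) * Real.exp (β * ((a : ℝ) - b))) := by
  simp only [pottsWeight, Nat.factorial_succ]
  have : Real.exp (β / 2 * (((a + 1 : ℕ) : ℝ) ^ 2 + (b : ℝ) ^ 2 + (c : ℝ) ^ 2)) =
      Real.exp (β / 2 * ((a : ℝ) ^ 2 + ((b + 1 : ℕ) : ℝ) ^ 2 + (c : ℝ) ^ 2)) *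
        Real.exp (β * ((a : ℝ) - b)) := by
    rw [← Real.exp_add]; congr 1; push_cast; ring
  rw [this]
  have h1 := Nat.factorial_pos a
  have h2 := Nat.factorial_pos b
  have h3 := Nat.factorial_pos c
  push_cast
  field_simp

lemma pottsWeight_swap12 (n : ℕ) (β : ℝ) (a b c : ℕ) :
    pottsWeight n β (a, b, c) = pottsWeight n β (a, c, b) := by
  simp only [pottsWeight]
  congr 2 <;> ring

lemma pottsWeight_swap01 (n : ℕ) (β : ℝ) (a b c : ℕ) :
    pottsWeight n β (a, b, c) = pottsWeight n β (b, a, c) := by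
  simp only [pottsWeight]
  congr 2 <;> ring

lemma pottsWeight_move02 (n : ℕ) (β : ℝ) (a b c : ℕ) :
    pottsWeight n β (a + 1, b, c) * (a + 1) =
      pottsWeight n β (a, b, c + 1) * ((c + 1) * Real.exp (β * ((a : ℝ) - c))) := by
  rw [pottsWeight_swap12 n β (a + 1), pottsWeight_swap12 n β a]
  exact pottsWeight_move01 n β a c b

lemma pottsWeight_move21 (n : ℕ) (β : ℝ) (a b c : ℕ) :
    pottsWeight n β (a, b, c + 1) * (c + 1) =
      pottsWeight n β (a, b + 1, c) * ((b + 1) * Real.exp (β * ((c : ℝ) - b))) := by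
  rw [pottsWeight_swap12 n β a b, pottsWeight_swap01 n β a, pottsWeight_swap12 n β a (b+1),
    pottsWeight_swap01 n β a c, ]
  rw [pottsWeight_swap12 n β (c + 1), pottsWeight_swap12 n β c]
  have := pottsWeight_move01 n β c b a
  exact this

/-- Recoloring from the second to the first color does not decrease the weight once the second
count is at least `1/β`, the minimizer of the convex function `x ↦ βx - log x`. -/
lemma move01_up (n : ℕ) (β : ℝ) (a b c : ℕ) (hab : b + 1 ≤ a)
    (hb : 1 ≤ β * (b + 1)) :
    pottsWeight n β (a, b + 1, c) ≤ pottsWeight n β (a + 1, b, c) := by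
  have h := pottsWeight_move01 n β a b c
  have hab' : (b : ℝ) + 1 ≤ a := by exact_mod_cast hab
  have hw := pottsWeight_pos n β (a, b + 1, c)
  have e : (a : ℝ) + 1 ≤ (b + 1) * Real.exp (β * ((a : ℝ) - b)) := by
    have := Real.add_one_le_exp (β * ((a : ℝ) - b))
    have hd : (0 : ℝ) ≤ a - b := by linarith
    calc (a : ℝ) + 1 ≤ (b + 1) * (β * ((a : ℝ) - b) + 1) := by nlinarith
      _ ≤ _ := mul_le_mul_of_nonneg_left this (by positivity)
  have : pottsWeight n β (a, b + 1, c) * (a + 1) ≤ pottsWeight n β (a + 1, b, c) * (a + 1) := by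
    rw [h]; exact mul_le_mul_of_nonneg_left e hw.le
  exact le_of_mul_le_mul_right this (by positivity)

/-- Recoloring from the second to the third color does not decrease the weight while the second
count is at most `1/β`. -/
lemma move21_up (n : ℕ) (β : ℝ) (a b c : ℕ) (hbc : c ≤ b)
    (hb : β * (b + 1) ≤ 1) :
    pottsWeight n β (a, b + 1, c) ≤ pottsWeight n β (a, b, c + 1) := by
  have h := pottsWeight_move21 n β a b c
  have hbc' : (c : ℝ) ≤ b := by exact_mod_cast hbc
  have hw := pottsWeight_pos n β (a, b + 1, c)
  have e : (c : ℝ) + 1 ≤ (b + 1) * Real.exp (β * ((c : ℝ) - b)) := by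
    have := Real.add_one_le_exp (β * ((c : ℝ) - b))
    calc (c : ℝ) + 1 ≤ (b + 1) * (β * ((c : ℝ) - b) + 1) := by nlinarith
      _ ≤ _ := mul_le_mul_of_nonneg_left this (by positivity)
  have : pottsWeight n β (a, b + 1, c) * (c + 1) ≤ pottsWeight n β (a, b, c + 1) * (c + 1) := by
    rw [h]; exact mul_le_mul_of_nonneg_left e hw.le
  exact le_of_mul_le_mul_right this (by positivity)

/-- Recoloring from the second to the first color loses at most a factor `n + 1`. -/
lemma move01_loss (n : ℕ) (β : ℝ) (hβ : 0 < β) (a b c : ℕ) (hab : b ≤ a) (han : a ≤ n) :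
    pottsWeight n β (a, b + 1, c) ≤ (n + 1) * pottsWeight n β (a + 1, b, c) := by
  have h := pottsWeight_move01 n β a b c
  have hab' : (b : ℝ) ≤ a := by exact_mod_cast hab
  have han' : (a : ℝ) ≤ n := by exact_mod_cast han
  have hw := pottsWeight_pos n β (a, b + 1, c)
  have hw' := pottsWeight_pos n β (a + 1, b, c)
  have h1 : 1 ≤ Real.exp (β * ((a : ℝ) - b)) :=
    Real.one_le_exp (mul_nonneg hβ.le (by linarith))
  have h2 : 1 ≤ ((b : ℝ) + 1) * Real.exp (β * ((a : ℝ) - b)) := by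
    have : (0 : ℝ) ≤ b := by positivity
    nlinarith
  calc pottsWeight n β (a, b + 1, c)
      ≤ pottsWeight n β (a, b + 1, c) * (((b : ℝ) + 1) * Real.exp (β * ((a : ℝ) - b))) :=
        le_mul_of_one_le_right hw.le h2
    _ = pottsWeight n β (a + 1, b, c) * (a + 1) := h.symm
    _ ≤ _ := by nlinarith

lemma move02_loss (n : ℕ) (β : ℝ) (hβ : 0 < β) (a b c : ℕ) (hac : c ≤ a) (han : a ≤ n) :
    pottsWeight n β (a, b, c + 1) ≤ (n + 1) * pottsWeight n β (a + 1, b, c) := by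
  rw [pottsWeight_swap12 n β (a + 1), pottsWeight_swap12 n β a]
  exact move01_loss n β hβ a c b hac han

/-- The slope of the log-ratio `diagLogRatio`. -/
noncomputable def diagSlope (k β x : ℝ) : ℝ :=
  3 * β - 2 / (3 * k - x) - 1 / (x + 1) - 1 / (x + 2)

/-- The logarithm of the ratio of the weights at `(t + 2, m - 1, m - 1)` and `(t, m, m)`, where
`m = (3 * k - t) / 2`, as a function of a real variable `t`. -/
noncomputable def diagLogRatio (k β x : ℝ) : ℝ :=
  2 * Real.log ((3 * k - x) / 2) - Real.log (x + 1) - Real.log (x + 2) + β * (3 * x - 3 * k + 3)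

lemma hasDerivAt_diagLogRatio (k β x : ℝ) (hx0 : 0 ≤ x) (hx : x < 3 * k) :
    HasDerivAt (diagLogRatio k β) (diagSlope k β x) x := by
  have h1 : HasDerivAt (fun x : ℝ => (3 * k - x) / 2) (-1 / 2) x := by
    simpa using ((hasDerivAt_id x).const_sub (3 * k)).div_const 2
  have h2 := (h1.log (by linarith : 0 < (3 * k - x) / 2).ne').const_mul 2
  have h3 := ((hasDerivAt_id x).add_const 1).log (by simp; linarith : (id x + 1 : ℝ) ≠ 0)
  have h4 := ((hasDerivAt_id x).add_const 2).log (by simp; linarith : (id x + 2 : ℝ) ≠ 0)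
  have h5 : HasDerivAt (fun x : ℝ => β * (3 * x - 3 * k + 3)) (β * 3) x := by
    have := ((((hasDerivAt_id x).const_mul 3).sub_const (3 * k)).add_const 3).const_mul β
    simpa using this
  have := ((h2.sub h3).sub h4).add h5
  refine this.congr_deriv ?_
  have : 3 * k - x ≠ 0 := by linarith
  simp only [diagSlope, id]
  field_simp
  ring

/-- The slope is concave, so it cannot be positive, then negative, then positive. -/
lemma diagSlope_no_valley (k β p q r : ℝ) (hp : 0 ≤ p) (hpq : p < q) (hqr : q < r)
    (hr : r < 3 * k) (h1 : 0 ≤ diagSlope k β p) (h2 : diagSlope k β q < 0)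
    (h3 : 0 ≤ diagSlope k β r) : False := by
  -- convexity of `1 / x` for each of the three terms
  have conv : ∀ u v w : ℝ, 0 < u → 0 < v → 0 < w → ∀ s t : ℝ, 0 ≤ s → 0 ≤ t → s + t = 1 →
      v = s * u + t * w → 1 / v ≤ s * (1 / u) + t * (1 / w) := by
    intro u v w hu hv hw s t hs ht hst hv'
    have ht' : t = 1 - s := by linarith
    rw [div_le_iff₀ hv, hv', ht']
    have : (s * (1 / u) + (1 - s) * (1 / w)) * (s * u + (1 - s) * w) =
        1 + s * (1 - s) * (u - w) ^ 2 / (u * w) := by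
      field_simp; ring
    rw [this]
    have : 0 ≤ s * (1 - s) * (u - w) ^ 2 / (u * w) := by
      have : 0 ≤ 1 - s := by linarith
      positivity
    linarith
  set s := (r - q) / (r - p) with hs
  set t := (q - p) / (r - p) with ht
  have hrp : 0 < r - p := by linarith
  have hs0 : 0 ≤ s := div_nonneg (by linarith) hrp.le
  have ht0 : 0 ≤ t := div_nonneg (by linarith) hrp.le
  have hst : s + t = 1 := by rw [hs, ht]; field_simp; ring
  have hq : q = s * p + t * r := by rw [hs, ht]; field_simp; ring
  have c1 := conv (3 * k - p) (3 * k - q) (3 * k - r) (by linarith) (by linarith) (by linarith)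
    s t hs0 ht0 hst (by rw [hq]; linear_combination (-3 * k) * hst)
  have c2 := conv (p + 1) (q + 1) (r + 1) (by linarith) (by linarith) (by linarith)
    s t hs0 ht0 hst (by rw [hq]; linear_combination -hst)
  have c3 := conv (p + 2) (q + 2) (r + 2) (by linarith) (by linarith) (by linarith)
    s t hs0 ht0 hst (by rw [hq]; linear_combination (-2) * hst)
  have e : ∀ y, diagSlope k β y = 3 * β - 2 * (1 / (3 * k - y)) - 1 / (y + 1) - 1 / (y + 2) := by
    intro y; simp only [diagSlope]; ring
  rw [e] at h1 h2 h3
  have m1 := mul_nonneg hs0 h1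
  have m3 := mul_nonneg ht0 h3
  have : s * (3 * β) + t * (3 * β) = 3 * β := by rw [← add_mul, hst, one_mul]
  nlinarith

/-- The log-ratio has no sign pattern `+, -, +` to the right of the balanced point `x = k`. At
`x = k` either its slope is nonnegative or its value is nonpositive. -/
lemma diagLogRatio_no_valley (k β p q r : ℝ) (hk : 3 ≤ k) (hp : k ≤ p) (hpq : p < q) (hqr : q < r)
    (hr : r < 3 * k) (h1 : 0 < diagLogRatio k β p) (h2 : diagLogRatio k β q < 0)
    (h3 : 0 < diagLogRatio k β r) : False := by
  have mvt : ∀ u v : ℝ, k ≤ u → u < v → v < 3 * k → ∃ z, u < z ∧ z < v ∧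
      diagLogRatio k β v - diagLogRatio k β u = diagSlope k β z * (v - u) := by
    intro u v hu huv hv
    obtain ⟨z, hz, hzz⟩ := exists_hasDerivAt_eq_slope (diagLogRatio k β) (diagSlope k β) huv
      (fun y hy => (hasDerivAt_diagLogRatio k β y (by linarith [hy.1])
        (by linarith [hy.2])).continuousAt.continuousWithinAt)
      (fun y hy => hasDerivAt_diagLogRatio k β y (by linarith [hy.1]) (by linarith [hy.2]))
    refine ⟨z, hz.1, hz.2, ?_⟩
    rw [hzz, div_mul_cancel₀ _ (by linarith)]
  obtain ⟨z2, hz2, hz2', e2⟩ := mvt p q hp hpq (by linarith)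
  obtain ⟨z3, hz3, hz3', e3⟩ := mvt q r (by linarith) hqr hr
  have s2 : diagSlope k β z2 < 0 := by
    by_contra h; push Not at h; nlinarith
  have s3 : 0 ≤ diagSlope k β z3 := by
    by_contra h; push Not at h; nlinarith
  by_cases hs : 0 ≤ diagSlope k β k
  · exact diagSlope_no_valley k β k z2 z3 (by linarith) (by linarith) (by linarith)
      (by linarith) hs s2 s3
  · push Not at hs
    have hk0 : diagLogRatio k β k ≤ 0 := by
      have l1 := Real.le_log_one_add_of_nonneg (x := 1 / k) (by positivity)
      have l2 := Real.le_log_one_add_of_nonneg (x := 2 / k) (by positivity)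
      have e1 : Real.log (1 + 1 / k) = Real.log (k + 1) - Real.log k := by
        rw [← Real.log_div (by positivity) (by positivity)]; congr 1; field_simp
      have e2 : Real.log (1 + 2 / k) = Real.log (k + 2) - Real.log k := by
        rw [← Real.log_div (by positivity) (by positivity)]; congr 1; field_simp
      have f1 : 2 * (1 / k) / (1 / k + 2) = 2 / (2 * k + 1) := by field_simp; ring
      have f2 : 2 * (2 / k) / (2 / k + 2) = 2 / (k + 1) := by field_simp; ring
      rw [e1, f1] at l1
      rw [e2, f2] at l2
      have f3 : 1 / k - 2 / (2 * k + 1) ≤ 1 / (k + 1) - 1 / (k + 2) := by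
        have a1 : 1 / k - 2 / (2 * k + 1) = 1 / (k * (2 * k + 1)) := by field_simp; ring
        have a2 : 1 / (k + 1) - 1 / (k + 2) = 1 / ((k + 1) * (k + 2)) := by field_simp; ring
        rw [a1, a2]
        exact one_div_le_one_div_of_le (by positivity) (by nlinarith)
      have f4 : 2 / (k + 1) = 2 * (1 / (k + 1)) := by ring
      simp only [diagSlope] at hs
      simp only [diagLogRatio]
      have g1 : (3 * k - k) / 2 = k := by ring
      have g2 : 2 / (3 * k - k) = 1 / k := by
        have : 3 * k - k = 2 * k := by ring
        rw [this]; field_simp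
      rw [g2] at hs
      rw [g1]
      linarith
    rcases hp.eq_or_lt with hp | hp
    · rw [← hp] at h1; linarith
    obtain ⟨z1, hz1, hz1', e1⟩ := mvt k p le_rfl hp (by linarith)
    have s1 : 0 ≤ diagSlope k β z1 := by
      by_contra h; push Not at h; nlinarith
    exact diagSlope_no_valley k β z1 z2 z3 (by linarith) (by linarith) (by linarith)
      (by linarith) s1 s2 s3

/-- Weight of the `j`-th balanced class `(k + 2j, k - j, k - j)`. -/
noncomputable def diagWeight (k : ℕ) (β : ℝ) (j : ℕ) : ℝ :=
  pottsWeight (3 * k) β (k + 2 * j, k - j, k - j)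

lemma diagWeight_pos (k : ℕ) (β : ℝ) (j : ℕ) : 0 < diagWeight k β j := pottsWeight_pos _ _ _

lemma diagWeight_succ (k : ℕ) (β : ℝ) (j : ℕ) (hj : j < k) :
    diagWeight k β (j + 1) = diagWeight k β j * Real.exp (diagLogRatio k β ((k : ℝ) + 2 * j)) := by
  obtain ⟨i, rfl⟩ : ∃ i, k = j + (i + 1) := ⟨k - j - 1, by omega⟩
  simp only [diagWeight]
  have a1 : j + (i + 1) - (j + 1) = i := by omega
  have a2 : j + (i + 1) - j = i + 1 := by omega
  rw [a1, a2]
  set a := j + (i + 1) + 2 * j with ha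
  have a3 : j + (i + 1) + 2 * (j + 1) = a + 1 + 1 := by omega
  rw [a3]
  have m1 := pottsWeight_move01 (3 * (j + (i + 1))) β a i (i + 1)
  have m2 := pottsWeight_move02 (3 * (j + (i + 1))) β (a + 1) i i
  have r : ((j + (i + 1) : ℕ) : ℝ) + 2 * j = a := by rw [ha]; push_cast; ring
  rw [r]
  have e : Real.exp (diagLogRatio ((j + (i + 1) : ℕ) : ℝ) β a) =
      ((i : ℝ) + 1) ^ 2 / (((a : ℝ) + 1) * (a + 2)) *
        (Real.exp (β * ((a : ℝ) - i)) * Real.exp (β * (((a + 1 : ℕ) : ℝ) - i))) := by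
    rw [← Real.exp_add]
    have b1 : (3 * ((j + (i + 1) : ℕ) : ℝ) - a) / 2 = i + 1 := by rw [ha]; push_cast; ring
    simp only [diagLogRatio, b1]
    have b2 : 2 * Real.log ((i : ℝ) + 1) - Real.log ((a : ℝ) + 1) - Real.log ((a : ℝ) + 2) =
        Real.log (((i : ℝ) + 1) ^ 2 / (((a : ℝ) + 1) * (a + 2))) := by
      rw [Real.log_div (by positivity) (by positivity), Real.log_pow,
        Real.log_mul (by positivity) (by positivity)]
      push_cast; ring
    rw [b2, Real.exp_add, Real.exp_log (by positivity)]
    congr 2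
    rw [ha]; push_cast; ring
  rw [e]
  push_cast at m1 m2 ⊢
  have h1 : pottsWeight (3 * (j + (i + 1))) β (a + 1, i, i + 1) =
      pottsWeight (3 * (j + (i + 1))) β (a, i + 1, i + 1) *
        ((i + 1) * Real.exp (β * ((a : ℝ) - i))) / (a + 1) := by
    rw [eq_div_iff (by positivity)]; exact m1
  rw [h1] at m2
  have h2 : pottsWeight (3 * (j + (i + 1))) β (a + 1 + 1, i, i) =
      pottsWeight (3 * (j + (i + 1))) β (a, i + 1, i + 1) *
        ((i + 1) * Real.exp (β * ((a : ℝ) - i))) / (a + 1) *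
        ((i + 1) * Real.exp (β * ((a : ℝ) + 1 - i))) / (a + 1 + 1) := by
    rw [eq_div_iff (by positivity)]; exact m2
  rw [h2]
  field_simp
  ring

lemma exists_ascent (u : ℕ → ℝ) (a b : ℕ) (hab : a ≤ b) (h : u a < u b) :
    ∃ j, a ≤ j ∧ j < b ∧ u j < u (j + 1) := by
  by_contra hc
  push Not at hc
  have : ∀ d, a + d ≤ b → u (a + d) ≤ u a := by
    intro d
    induction d with
    | zero => intro _; simp
    | succ d ih => intro hd; exact (hc (a + d) (by omega) (by omega)).trans (ih (by omega))
  have := this (b - a) (by omega)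
  rw [Nat.add_sub_cancel' hab] at this
  linarith

/-- Along the balanced line the weight is decreasing, then increasing, then decreasing (some of
these phases may be empty). -/
lemma diagWeight_no_valley (k : ℕ) (hk : 3 ≤ k) (β : ℝ) (a b c : ℕ) (hab : a ≤ b) (hbc : b ≤ c)
    (hc : c ≤ k) (h0 : diagWeight k β 0 < diagWeight k β a)
    (h1 : diagWeight k β b < diagWeight k β a) (h2 : diagWeight k β b < diagWeight k β c) :
    False := by
  obtain ⟨i1, _, hi1, g1⟩ := exists_ascent (diagWeight k β) 0 a (Nat.zero_le _) h0
  obtain ⟨i2, hi2, hi2', g2⟩ := exists_ascent (fun j => -diagWeight k β j) a b hab (by simpa using h1)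
  obtain ⟨i3, hi3, hi3', g3⟩ := exists_ascent (diagWeight k β) b c hbc h2
  have pos : ∀ i, i < k → diagWeight k β i < diagWeight k β (i + 1) →
      0 < diagLogRatio k β ((k : ℝ) + 2 * i) := by
    intro i hi h
    rw [diagWeight_succ k β i hi, lt_mul_iff_one_lt_right (diagWeight_pos _ _ _)] at h
    exact Real.one_lt_exp_iff.mp h
  have neg : diagLogRatio k β ((k : ℝ) + 2 * i2) < 0 := by
    have h : diagWeight k β (i2 + 1) < diagWeight k β i2 := by simpa using g2
    rw [diagWeight_succ k β i2 (by omega), mul_lt_iff_lt_one_right (diagWeight_pos _ _ _)] at h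
    exact Real.exp_lt_one_iff.mp h
  have c12 : (i1 : ℝ) < i2 := by exact_mod_cast (by omega : i1 < i2)
  have c23 : (i2 : ℝ) < i3 := by exact_mod_cast (by omega : i2 < i3)
  have c3 : (i3 : ℝ) < k := by exact_mod_cast (by omega : i3 < k)
  have c1 : (0 : ℝ) ≤ i1 := by positivity
  exact diagLogRatio_no_valley k β _ _ _ (by exact_mod_cast hk) (by linarith) (by linarith)
    (by linarith) (by linarith) (pos i1 (by omega) g1) neg (pos i3 (by omega) g3)

/-! ### Paths of color counts with large weights -/

/-- A function `s` of ordered color counts changes by at most `δ` along each single recoloring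
one of whose end classes has weight at least `θ`. -/
def StepBound (n : ℕ) (β θ δ : ℝ) (s : ℕ → ℕ → ℕ → ℝ) : Prop :=
  (∀ a b c, a + b + c + 1 = n → b + 1 ≤ a → c ≤ b →
    (θ ≤ pottsWeight n β (a, b + 1, c) ∨ θ ≤ pottsWeight n β (a + 1, b, c)) →
    |s a (b + 1) c - s (a + 1) b c| ≤ δ) ∧
  (∀ a b c, a + b + c + 1 = n → b + 1 ≤ a → c + 1 ≤ b →
    (θ ≤ pottsWeight n β (a, b + 1, c) ∨ θ ≤ pottsWeight n β (a, b, c + 1)) →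
    |s a (b + 1) c - s a b (c + 1)| ≤ δ) ∧
  (∀ a b c, a + b + c + 1 = n → b ≤ a → c + 1 ≤ b →
    (θ ≤ pottsWeight n β (a, b, c + 1) ∨ θ ≤ pottsWeight n β (a + 1, b, c)) →
    |s a b (c + 1) - s (a + 1) b c| ≤ δ)

/-- From any ordered class, a path along which the weight never decreases, except for a factor
`n + 1` in its last step, leads to the balanced line. The second count drops in each step. -/
lemma path_to_diagonal (k : ℕ) (β θ δ : ℝ) (hβ : 0 < β) (hδ : 0 ≤ δ) (s : ℕ → ℕ → ℕ → ℝ)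
    (hs : StepBound (3 * k) β θ δ s) :
    ∀ b a c : ℕ, a + b + c = 3 * k → b ≤ a → c ≤ b → θ ≤ pottsWeight (3 * k) β (a, b, c) →
      ∃ j ≤ k, s a b c ≤ s (k + 2 * j) (k - j) (k - j) + b * δ ∧
        pottsWeight (3 * k) β (a, b, c) ≤ ((3 * k : ℕ) + 1) * diagWeight k β j := by
  intro b
  induction b with
  | zero =>
    intro a c hsum hba hcb hθ
    have hc : c = 0 := by omega
    subst hc
    have ha : a = k + 2 * k := by omega
    subst ha
    refine ⟨k, le_rfl, by simp, ?_⟩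
    simp only [diagWeight, Nat.sub_self]
    exact le_mul_of_one_le_left (pottsWeight_pos _ _ _).le (by simp)
  | succ b ih =>
    intro a c hsum hba hcb hθ
    rcases Nat.eq_or_lt_of_le hcb with hcb' | hcb'
    · subst hcb'
      refine ⟨k - (b + 1), by omega, ?_, ?_⟩
      · have e1 : k + 2 * (k - (b + 1)) = a := by omega
        have e2 : k - (k - (b + 1)) = b + 1 := by omega
        rw [e1, e2]
        have : 0 ≤ ((b + 1 : ℕ) : ℝ) * δ := by positivity
        linarith
      · have e1 : k + 2 * (k - (b + 1)) = a := by omega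
        have e2 : k - (k - (b + 1)) = b + 1 := by omega
        simp only [diagWeight, e1, e2]
        exact le_mul_of_one_le_left (pottsWeight_pos _ _ _).le (by simp)
    have hcb2 : c ≤ b := by omega
    -- a weakly ascending step, followed by the induction hypothesis
    have fin : ∀ a' c', a' + b + c' = 3 * k → b ≤ a' → c' ≤ b →
        pottsWeight (3 * k) β (a, b + 1, c) ≤ pottsWeight (3 * k) β (a', b, c') →
        |s a (b + 1) c - s a' b c'| ≤ δ →
        ∃ j ≤ k, s a (b + 1) c ≤ s (k + 2 * j) (k - j) (k - j) + (b + 1 : ℕ) * δ ∧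
        pottsWeight (3 * k) β (a, b + 1, c) ≤ ((3 * k : ℕ) + 1) * diagWeight k β j := by
      intro a' c' h1 h2 h3 h4 h5
      obtain ⟨j, hj, g1, g2⟩ := ih a' c' h1 h2 h3 (hθ.trans h4)
      refine ⟨j, hj, ?_, h4.trans g2⟩
      have := (abs_le.mp h5).2
      push_cast
      linarith
    by_cases hb : 1 ≤ β * (b + 1)
    · exact fin (a + 1) c (by omega) (by omega) hcb2 (move01_up _ _ _ _ _ hba hb)
        (hs.1 a b c (by omega) hba hcb2 (Or.inl hθ))
    push Not at hb
    rcases Nat.eq_or_lt_of_le hcb2 with h | h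
    -- `b + 1 = c + 1`: one more step reaches the line
    · subst h
      refine ⟨k - c, by omega, ?_, ?_⟩
      · have e1 : k + 2 * (k - c) = a + 1 := by omega
        have e2 : k - (k - c) = c := by omega
        rw [e1, e2]
        have := (abs_le.mp (hs.1 a c c (by omega) hba le_rfl (Or.inl hθ))).2
        have : 0 ≤ (c : ℝ) * δ := by positivity
        push_cast
        linarith
      · have e1 : k + 2 * (k - c) = a + 1 := by omega
        have e2 : k - (k - c) = c := by omega
        simp only [diagWeight, e1, e2]
        exact move01_loss _ _ hβ a c c (by omega) (by omega)
    · exact fin a (c + 1) (by omega) (by omega) (by omega) (move21_up _ _ _ _ _ hcb2 hb.le)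
        (hs.2.1 a b c (by omega) hba (by omega) (Or.inl hθ))

lemma path_along_diagonal (k : ℕ) (β θ δ : ℝ) (s : ℕ → ℕ → ℕ → ℝ)
    (hs : StepBound (3 * k) β θ δ s) (i : ℕ) :
    ∀ d, i + d ≤ k → (∀ j, i ≤ j → j ≤ i + d → θ ≤ diagWeight k β j) →
      |s (k + 2 * i) (k - i) (k - i) - s (k + 2 * (i + d)) (k - (i + d)) (k - (i + d))| ≤
        2 * d * δ := by
  intro d
  induction d with
  | zero => intro _ _; simp
  | succ d ih =>
    intro hd hθ
    have h0 := ih (by omega) (fun j h1 h2 => hθ j h1 (by omega))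
    have t1 := hθ (i + d) (by omega) (by omega)
    have t2 := hθ (i + d + 1) (by omega) (by omega)
    simp only [diagWeight] at t1 t2
    obtain ⟨m, hm⟩ : ∃ m, k - (i + d) = m + 1 := ⟨k - (i + d) - 1, by omega⟩
    have hm' : k - (i + d + 1) = m := by omega
    have e : k + 2 * (i + d + 1) = k + 2 * (i + d) + 1 + 1 := by omega
    rw [← Nat.add_assoc i d 1, hm', e]
    rw [hm'] at t2
    rw [e] at t2
    rw [hm] at t1 h0
    have h1 := hs.2.2 (k + 2 * (i + d)) (m + 1) m (by omega) (by omega) (by omega) (Or.inl t1)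
    have h2 := hs.1 (k + 2 * (i + d) + 1) m m (by omega) (by omega) (by omega) (Or.inr t2)
    rw [abs_le] at *
    push_cast
    constructor <;> linarith [h0.1, h0.2, h1.1, h1.2, h2.1, h2.2]

lemma path_along_diagonal' (k : ℕ) (β θ δ : ℝ) (hδ : 0 ≤ δ) (s : ℕ → ℕ → ℕ → ℝ)
    (hs : StepBound (3 * k) β θ δ s) (i i' : ℕ) (hi : i ≤ k) (hi' : i' ≤ k)
    (hθ : ∀ j, min i i' ≤ j → j ≤ max i i' → θ ≤ diagWeight k β j) :
    |s (k + 2 * i) (k - i) (k - i) - s (k + 2 * i') (k - i') (k - i')| ≤ 2 * k * δ := by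
  have main : ∀ i i' : ℕ, i ≤ i' → i' ≤ k → (∀ j, i ≤ j → j ≤ i' → θ ≤ diagWeight k β j) →
      |s (k + 2 * i) (k - i) (k - i) - s (k + 2 * i') (k - i') (k - i')| ≤ 2 * k * δ := by
    intro i i' hii hi' h
    obtain ⟨d, rfl⟩ := Nat.exists_eq_add_of_le hii
    refine (path_along_diagonal k β θ δ s hs i d hi' h).trans ?_
    have : (d : ℝ) ≤ k := by exact_mod_cast (by omega : d ≤ k)
    gcongr
  rcases le_total i i' with h | h
  · exact main i i' h hi' fun j h1 h2 => hθ j (by omega) (by omega)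
  · rw [abs_sub_comm]
    exact main i' i h hi fun j h1 h2 => hθ j (by omega) (by omega)

/-- Every ordered class is joined to the class next to the heaviest balanced class by a path of
length at most `3n` whose steps all touch classes of weight at least `θ`. -/
lemma path_to_root (k : ℕ) (hk : 3 ≤ k) (β θ δ : ℝ) (hβ : 0 < β) (hδ : 0 ≤ δ)
    (s : ℕ → ℕ → ℕ → ℝ) (hs : StepBound (3 * k) β θ δ s)
    (jmin jmax : ℕ) (hjmax : jmax < k)
    (hmin : ∀ j ≤ k, diagWeight k β jmin ≤ diagWeight k β j)
    (hmax : ∀ j ≤ k, diagWeight k β j ≤ diagWeight k β jmax)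
    (a b c : ℕ) (hsum : a + b + c = 3 * k) (hba : b ≤ a) (hcb : c ≤ b)
    (hθ : θ * (((3 * k : ℕ) + 1) * (diagWeight k β 0 / diagWeight k β jmin)) =
      pottsWeight (3 * k) β (a, b, c)) :
    s a b c ≤ s (k + 2 * jmax + 1) (k - jmax) (k - jmax - 1) + 3 * (3 * k : ℕ) * δ ∧
      θ ≤ ((3 * k : ℕ) + 1) *
        pottsWeight (3 * k) β (k + 2 * jmax + 1, k - jmax, k - jmax - 1) := by
  set R := diagWeight k β 0 / diagWeight k β jmin with hR
  have hR1 : 1 ≤ R := by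
    rw [hR, one_le_div (diagWeight_pos _ _ _)]; exact hmin 0 (by omega)
  have hw := pottsWeight_pos (3 * k) β (a, b, c)
  have hn : (1 : ℝ) ≤ (3 * k : ℕ) + 1 := by simp
  have hθ0 : 0 < θ := by
    by_contra h
    push Not at h
    have : 0 ≤ ((3 * k : ℕ) + 1) * R := by positivity
    nlinarith
  have hθw : θ ≤ pottsWeight (3 * k) β (a, b, c) := by
    rw [← hθ]
    exact le_mul_of_one_le_right hθ0.le (by nlinarith)
  obtain ⟨j0, hj0, g1, g2⟩ := path_to_diagonal k β θ δ hβ hδ s hs b a c hsum hba hcb hθw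
  have hθR : θ * R ≤ diagWeight k β j0 := by
    have h : ((3 * k : ℕ) + 1) * (θ * R) ≤ ((3 * k : ℕ) + 1) * diagWeight k β j0 := by
      calc _ = θ * (((3 * k : ℕ) + 1) * R) := by ring
        _ ≤ _ := by rw [hθ]; exact g2
    exact le_of_mul_le_mul_left h (by linarith)
  have hθj0 : θ ≤ diagWeight k β j0 := (le_mul_of_one_le_right hθ0.le hR1).trans hθR
  have hpath : ∀ j, min j0 jmax ≤ j → j ≤ max j0 jmax → θ ≤ diagWeight k β j := by
    intro j hj1 hj2
    rcases le_or_gt (diagWeight k β j0) (diagWeight k β 0) with h | h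
    -- below the balanced weight: the minimum of the line suffices
    · refine le_trans ?_ (hmin j (by omega))
      have := hθR.trans h
      rw [hR, mul_div_assoc', div_le_iff₀ (diagWeight_pos _ _ _), mul_comm] at this
      exact le_of_mul_le_mul_left this (diagWeight_pos _ _ _)
    · refine hθj0.trans ?_
      by_contra hlt
      push Not at hlt
      have hm := hmax j0 hj0
      rcases le_total j0 jmax with hle | hle
      · exact diagWeight_no_valley k hk β j0 j jmax (by omega) (by omega) hjmax.le h hlt
          (hlt.trans_le hm)
      · exact diagWeight_no_valley k hk β jmax j j0 (by omega) (by omega) hj0 (h.trans_le hm)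
          (hlt.trans_le hm) hlt
  have g3 := path_along_diagonal' k β θ δ hδ s hs j0 jmax hj0 hjmax.le hpath
  have hθmax : θ ≤ diagWeight k β jmax := hθj0.trans (hmax j0 hj0)
  obtain ⟨m, hm⟩ : ∃ m, k - jmax = m + 1 := ⟨k - jmax - 1, by omega⟩
  simp only [diagWeight] at hθmax
  rw [hm] at g3 hθmax ⊢
  rw [Nat.add_sub_cancel]
  have g4 := hs.2.2 (k + 2 * jmax) (m + 1) m (by omega) (by omega) le_rfl (Or.inl hθmax)
  refine ⟨?_, hθmax.trans (move02_loss _ _ hβ _ _ _ (by omega) (by omega))⟩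
  have hb : ((b : ℝ) + 2 * k + 1) * δ ≤ 3 * (3 * k : ℕ) * δ := by
    apply mul_le_mul_of_nonneg_right _ hδ
    have : b + 2 * k + 1 ≤ 3 * (3 * k) := by omega
    exact_mod_cast this
  linarith [(abs_le.mp g3).2, (abs_le.mp g4).2]

/-- The monochromatic class is not the heaviest balanced class once `n` is large. -/
lemma diagWeight_last_lt (k : ℕ) (μ : ℝ) (hμ : 0 < μ) (hk : 1 ≤ k)
    (hlarge : Real.exp (2 * μ) < 3 * k) :
    diagWeight k (μ / (3 * k : ℕ)) k < diagWeight k (μ / (3 * k : ℕ)) (k - 1) := by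
  obtain ⟨i, rfl⟩ : ∃ i, k = i + 1 := ⟨k - 1, by omega⟩
  have h := diagWeight_succ (i + 1) (μ / (3 * (i + 1) : ℕ)) i (by omega)
  rw [Nat.add_sub_cancel, h, mul_lt_iff_lt_one_right (diagWeight_pos _ _ _), Real.exp_lt_one_iff]
  simp only [diagLogRatio]
  push_cast at hlarge ⊢
  have hi : (0 : ℝ) ≤ i := by positivity
  have e1 : (3 * ((i : ℝ) + 1) - (i + 1 + 2 * i)) / 2 = 1 := by ring
  rw [e1, Real.log_one]
  have l1 : 0 ≤ Real.log ((i : ℝ) + 1 + 2 * i + 1) := Real.log_nonneg (by linarith)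
  have l2 : 2 * μ < Real.log ((i : ℝ) + 1 + 2 * i + 2) := by
    rw [Real.lt_log_iff_exp_lt (by positivity)]; linarith
  have l3 : μ / (3 * ((i : ℝ) + 1)) * (3 * (i + 1 + 2 * i) - 3 * (i + 1) + 3) ≤ 2 * μ := by
    rw [div_mul_eq_mul_div, div_le_iff₀ (by positivity)]
    nlinarith
  linarith

/-! ### Color classes and recoloring -/

/-- The configurations with color counts `σ`. -/
def colorSlice (n : ℕ) (σ : Fin 3 → ℕ) : Finset (Fin n → Fin 3) :=
  univ.filter (fun x => colorCount n x = σ)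

lemma mem_colorSlice {n : ℕ} {σ : Fin 3 → ℕ} {x : Fin n → Fin 3} :
    x ∈ colorSlice n σ ↔ colorCount n x = σ := by simp [colorSlice]

lemma mem_RGBset {n : ℕ} {x : Fin n → Fin 3} :
    x ∈ RGBset n ↔ colorCount n x 1 ≤ colorCount n x 0 ∧ colorCount n x 2 ≤ colorCount n x 1 := by
  simp [RGBset]

/-- Color counts `τ` arise from `σ` by recoloring one vertex from color `q` to color `p`. The
additive form avoids truncated subtraction. -/
def CountMove (p q : Fin 3) (σ τ : Fin 3 → ℕ) : Prop :=
  p ≠ q ∧ ∀ r, τ r + (if q = r then 1 else 0) = σ r + (if p = r then 1 else 0)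

lemma CountMove.symm {p q : Fin 3} {σ τ : Fin 3 → ℕ} (h : CountMove p q σ τ) :
    CountMove q p τ σ := ⟨h.1.symm, fun r => (h.2 r).symm⟩

lemma colorCount_update (n : ℕ) (x : Fin n → Fin 3) (i : Fin n) (p r : Fin 3) :
    colorCount n (Function.update x i p) r + (if x i = r then 1 else 0) =
      colorCount n x r + (if p = r then 1 else 0) := by
  simp only [colorCount, Finset.card_filter]
  rw [← Finset.add_sum_erase univ _ (mem_univ i),
    ← Finset.add_sum_erase univ (fun j => if x j = r then 1 else 0) (mem_univ i)]
  have : ∑ j ∈ univ.erase i, (if Function.update x i p j = r then 1 else 0) =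
      ∑ j ∈ univ.erase i, (if x j = r then 1 else 0) := by
    refine Finset.sum_congr rfl fun j hj => ?_
    rw [Function.update_of_ne (Finset.ne_of_mem_erase hj)]
  rw [this, Function.update_self]
  ring

lemma update_mem_colorSlice {n : ℕ} {p q : Fin 3} {σ τ : Fin 3 → ℕ} (h : CountMove p q σ τ)
    {x : Fin n → Fin 3} (hx : x ∈ colorSlice n σ) {i : Fin n} (hi : x i = q) :
    Function.update x i p ∈ colorSlice n τ := by
  rw [mem_colorSlice] at *
  funext r
  have h1 := colorCount_update n x i p r
  have h2 := h.2 r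
  rw [hi, hx] at h1
  omega

/-- Pairs of a configuration with counts `σ` and a vertex of color `q`. -/
def recolorings (n : ℕ) (σ : Fin 3 → ℕ) (q : Fin 3) : Finset ((Fin n → Fin 3) × Fin n) :=
  (colorSlice n σ ×ˢ univ).filter (fun e => e.1 e.2 = q)

lemma mem_recolorings {n : ℕ} {σ : Fin 3 → ℕ} {q : Fin 3} {e : (Fin n → Fin 3) × Fin n} :
    e ∈ recolorings n σ q ↔ e.1 ∈ colorSlice n σ ∧ e.1 e.2 = q := by
  simp [recolorings]

lemma sum_recolorings (n : ℕ) {p q : Fin 3} {σ τ : Fin 3 → ℕ} (h : CountMove p q σ τ)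
    (G : (Fin n → Fin 3) → (Fin n → Fin 3) → ℝ) :
    ∑ e ∈ recolorings n σ q, G e.1 (Function.update e.1 e.2 p) =
      ∑ e ∈ recolorings n τ p, G (Function.update e.1 e.2 q) e.1 := by
  refine Finset.sum_bij' (fun e _ => (Function.update e.1 e.2 p, e.2))
    (fun e _ => (Function.update e.1 e.2 q, e.2)) ?_ ?_ ?_ ?_ ?_
  · intro e he
    rw [mem_recolorings] at *
    exact ⟨update_mem_colorSlice h he.1 he.2, by simp⟩
  · intro e he
    rw [mem_recolorings] at *
    exact ⟨update_mem_colorSlice h.symm he.1 he.2, by simp⟩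
  · intro e he
    rw [mem_recolorings] at he
    ext1
    · simp [← he.2]
    · rfl
  · intro e he
    rw [mem_recolorings] at he
    ext1
    · simp [← he.2]
    · rfl
  · intro e he
    rw [mem_recolorings] at he
    simp [← he.2]

lemma sum_recolorings_fst (n : ℕ) (σ : Fin 3 → ℕ) (q : Fin 3) (G : (Fin n → Fin 3) → ℝ) :
    ∑ e ∈ recolorings n σ q, G e.1 = σ q * ∑ x ∈ colorSlice n σ, G x := by
  rw [recolorings, Finset.sum_filter, Finset.sum_product, Finset.mul_sum]
  refine Finset.sum_congr rfl fun x hx => ?_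
  rw [← Finset.sum_filter]
  dsimp only
  rw [Finset.sum_const, nsmul_eq_mul]
  rw [mem_colorSlice] at hx
  rw [← hx]; rfl

lemma card_slice_move (n : ℕ) {p q : Fin 3} {σ τ : Fin 3 → ℕ} (h : CountMove p q σ τ) :
    (σ q : ℝ) * (colorSlice n σ).card = τ p * (colorSlice n τ).card := by
  have h1 := sum_recolorings n h (fun _ _ => 1)
  rw [sum_recolorings_fst n σ q (fun _ => 1), sum_recolorings_fst n τ p (fun _ => 1)] at h1
  simpa using h1

lemma sum_colorCount (n : ℕ) (x : Fin n → Fin 3) : ∑ r, colorCount n x r = n := by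
  simp only [colorCount]
  rw [← Finset.card_eq_sum_card_fiberwise (f := x) (s := univ) (t := univ) (by simp)]
  simp

lemma card_colorSlice (a b c : ℕ) :
    ((colorSlice (a + b + c) ![a, b, c]).card : ℝ) * (a.factorial * b.factorial * c.factorial) =
      (a + b + c).factorial := by
  induction c generalizing a with
  | zero =>
    induction b generalizing a with
    | zero =>
      have : colorSlice (a + 0 + 0) ![a, 0, 0] = {fun _ => 0} := by
        ext x
        rw [mem_colorSlice, Finset.mem_singleton]
        constructor
        · intro h
          have h1 : colorCount (a + 0 + 0) x 1 = 0 := by rw [h]; rfl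
          have h2 : colorCount (a + 0 + 0) x 2 = 0 := by rw [h]; rfl
          simp only [colorCount, Finset.card_eq_zero, Finset.filter_eq_empty_iff] at h1 h2
          funext i
          have g1 := h1 (mem_univ i)
          have g2 := h2 (mem_univ i)
          generalize x i = y at *
          fin_cases y <;> simp_all
        · rintro rfl
          funext r
          fin_cases r <;> simp [colorCount]
      rw [this]
      simp
    | succ b ih =>
      have e : a + (b + 1) + 0 = a + 1 + b + 0 := by omega
      have hm : CountMove 0 1 ![a, b + 1, 0] ![a + 1, b, 0] := by
        refine ⟨by decide, fun r => ?_⟩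
        fin_cases r <;> simp
      have h := card_slice_move (a + 1 + b + 0) hm
      have i1 := ih (a + 1)
      rw [e, ← i1]
      simp only [Matrix.cons_val_one, Matrix.cons_val_zero, Nat.factorial_succ] at h ⊢
      push_cast at h ⊢
      linear_combination (a.factorial * b.factorial * Nat.factorial 0 : ℝ) * h
  | succ c ih =>
    have e : a + b + (c + 1) = a + 1 + b + c := by omega
    have hm : CountMove 0 2 ![a, b, c + 1] ![a + 1, b, c] := by
      refine ⟨by decide, fun r => ?_⟩
      fin_cases r <;> simp
    have h := card_slice_move (a + 1 + b + c) hm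
    have i1 := ih (a + 1)
    rw [e, ← i1]
    simp only [Matrix.cons_val_zero, Matrix.cons_val, Nat.factorial_succ] at h ⊢
    push_cast at h ⊢
    linear_combination (a.factorial * b.factorial * c.factorial : ℝ) * h

lemma two_pottsH (n : ℕ) (x : Fin n → Fin 3) :
    2 * pottsH n x + n = ∑ r, colorCount n x r ^ 2 := by
  have h1 : (univ.filter (fun e : Fin n × Fin n => x e.1 = x e.2)).card =
      ∑ r, colorCount n x r ^ 2 := by
    rw [Finset.card_eq_sum_card_fiberwise (f := fun e => x e.1) (t := univ) (by simp)]
    refine Finset.sum_congr rfl fun r _ => ?_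
    rw [sq, colorCount, ← Finset.card_product]
    congr 1
    ext e
    simp only [Finset.mem_filter, Finset.mem_univ, true_and, Finset.mem_product]
    constructor
    · rintro ⟨h1, h2⟩; exact ⟨h2, h1 ▸ h2⟩
    · rintro ⟨h1, h2⟩; exact ⟨h1.trans h2.symm, h1⟩
  have h2 : (univ.filter (fun e : Fin n × Fin n => x e.1 = x e.2)) =
      (univ.filter (fun e : Fin n × Fin n => e.1 < e.2 ∧ x e.1 = x e.2)) ∪
      ((univ.filter (fun e : Fin n × Fin n => e.2 < e.1 ∧ x e.2 = x e.1)) ∪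
      (univ.filter (fun e : Fin n × Fin n => e.1 = e.2))) := by
    ext e
    simp only [Finset.mem_filter, Finset.mem_univ, true_and, Finset.mem_union]
    constructor
    · intro h
      rcases lt_trichotomy e.1 e.2 with h' | h' | h'
      · exact Or.inl ⟨h', h⟩
      · exact Or.inr (Or.inr h')
      · exact Or.inr (Or.inl ⟨h', h.symm⟩)
    · rintro (h | h | h)
      · exact h.2
      · exact h.2.symm
      · rw [h]
  have h3 : (univ.filter (fun e : Fin n × Fin n => e.2 < e.1 ∧ x e.2 = x e.1)).card =
      pottsH n x := by
    rw [pottsH]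
    refine Finset.card_bij' (fun e _ => (e.2, e.1)) (fun e _ => (e.2, e.1)) ?_ ?_ ?_ ?_ <;> simp
  have h4 : (univ.filter (fun e : Fin n × Fin n => e.1 = e.2)).card = n := by
    rw [show (univ.filter (fun e : Fin n × Fin n => e.1 = e.2)) = univ.diag from ?_]
    · rw [Finset.diag_card]; simp
    · ext e; simp [Finset.mem_diag]
  rw [← h1, h2, Finset.card_union_of_disjoint, Finset.card_union_of_disjoint, h3, h4, pottsH]
  · ring
  · rw [Finset.disjoint_left]
    intro e h5 h6
    simp only [Finset.mem_filter, Finset.mem_univ, true_and] at h5 h6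
    exact absurd h6 (ne_of_gt h5.1)
  · rw [Finset.disjoint_left]
    intro e h5 h6
    simp only [Finset.mem_filter, Finset.mem_univ, true_and, Finset.mem_union] at h5 h6
    rcases h6 with h6 | h6
    · exact absurd h6.1 (not_lt_of_gt h5.1)
    · exact absurd h6 (ne_of_lt h5.1)

lemma pottsH_update_le (n : ℕ) (x : Fin n → Fin 3) (i : Fin n) (p : Fin 3) :
    pottsH n x ≤ pottsH n (Function.update x i p) + n := by
  by_cases hp : x i = p
  · rw [← hp, Function.update_eq_self]; omega
  have h1 := two_pottsH n x
  have h2 := two_pottsH n (Function.update x i p)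
  have h3 := colorCount_update n x i p
  have h4 := sum_colorCount n x
  generalize colorCount n x = σ at *
  generalize colorCount n (Function.update x i p) = τ at *
  generalize x i = q at *
  simp only [Fin.sum_univ_three] at h1 h2 h4
  have e0 := h3 0
  have e1 := h3 1
  have e2 := h3 2
  clear h3
  generalize σ 0 = s0 at *
  generalize σ 1 = s1 at *
  generalize σ 2 = s2 at *
  generalize τ 0 = t0 at *
  generalize τ 1 = t1 at *
  generalize τ 2 = t2 at *
  fin_cases p <;> fin_cases q <;> simp at hp e0 e1 e2 <;> subst e0 e1 e2 <;> nlinarith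

lemma pottsH_le (n : ℕ) (x : Fin n → Fin 3) : pottsH n x ≤ n ^ 2 := by
  refine (Finset.card_le_univ _).trans ?_
  simp [sq]

/-- The unnormalized Gibbs mass of a color class is its Potts weight, up to a constant. -/
lemma card_mul_exp_eq_pottsWeight (n : ℕ) (β : ℝ) (a b c : ℕ) (hn : a + b + c = n)
    (x : Fin n → Fin 3) (hx : x ∈ colorSlice n ![a, b, c]) :
    ((colorSlice n ![a, b, c]).card : ℝ) * Real.exp (β * pottsH n x) =
      Real.exp (-(β * n / 2)) * pottsWeight n β (a, b, c) := by
  subst hn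
  have h1 := card_colorSlice a b c
  have h2 := two_pottsH _ x
  rw [mem_colorSlice] at hx
  rw [hx] at h2
  simp only [Fin.sum_univ_three, Matrix.cons_val_zero, Matrix.cons_val_one, Matrix.cons_val] at h2
  have h3 : β * (pottsH (a + b + c) x : ℝ) = β / 2 * ((a : ℝ) ^ 2 + (b : ℝ) ^ 2 + (c : ℝ) ^ 2) +
      -(β * ((a + b + c : ℕ) : ℝ) / 2) := by
    have : (2 * (pottsH (a + b + c) x : ℝ) + ((a + b + c : ℕ) : ℝ)) =
      (a : ℝ) ^ 2 + (b : ℝ) ^ 2 + (c : ℝ) ^ 2 := by exact_mod_cast h2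
    rw [← this]; ring
  rw [h3, Real.exp_add, pottsWeight, ← h1]
  have := Nat.factorial_pos a
  have := Nat.factorial_pos b
  have := Nat.factorial_pos c
  field_simp

/-! ### The Dirichlet form controls fluctuations across color classes -/

/-- The unnormalized Gibbs factor. -/
noncomputable def gibbsFactor (n : ℕ) (β : ℝ) (x : Fin n → Fin 3) : ℝ :=
  Real.exp (β * pottsH n x)

lemma gibbsFactor_pos (n : ℕ) (β : ℝ) (x : Fin n → Fin 3) : 0 < gibbsFactor n β x :=
  Real.exp_pos _

/-- The unnormalized Dirichlet form of the Metropolis chain on `Ω_RGB`, for functions on all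
configurations. -/
noncomputable def energyRGB (n : ℕ) (β : ℝ) (F : (Fin n → Fin 3) → ℝ) : ℝ :=
  ∑ x ∈ RGBset n, ∑ y ∈ RGBset n,
    pottsProp n x y * min (gibbsFactor n β x) (gibbsFactor n β y) * (F x - F y) ^ 2

lemma pottsProp_nonneg (n : ℕ) (x y : Fin n → Fin 3) : 0 ≤ pottsProp n x y := by
  unfold pottsProp; positivity

lemma energyRGB_term_nonneg (n : ℕ) (β : ℝ) (F : (Fin n → Fin 3) → ℝ) (x y : Fin n → Fin 3) :
    0 ≤ pottsProp n x y * min (gibbsFactor n β x) (gibbsFactor n β y) * (F x - F y) ^ 2 :=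
  mul_nonneg (mul_nonneg (pottsProp_nonneg n x y)
    (le_min (gibbsFactor_pos n β x).le (gibbsFactor_pos n β y).le)) (sq_nonneg _)

lemma energyRGB_nonneg (n : ℕ) (β : ℝ) (F : (Fin n → Fin 3) → ℝ) : 0 ≤ energyRGB n β F :=
  Finset.sum_nonneg fun _ _ => Finset.sum_nonneg fun _ _ => energyRGB_term_nonneg n β F _ _

/-- A family of distinct single-site recolorings inside `Ω_RGB` has total squared increment at most
a polynomial factor times the Dirichlet form: one recoloring changes the Hamiltonian by at most
`n`, hence the Gibbs factor by at most `exp (β n)`. -/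
lemma sum_increments_le (n : ℕ) (hn : 1 ≤ n) (β : ℝ) (hβ : 0 ≤ β) (F : (Fin n → Fin 3) → ℝ)
    {ι : Type} (E : Finset ι) (u v : ι → Fin n → Fin 3)
    (hinj : Set.InjOn (fun e => (u e, v e)) (E : Set ι))
    (hu : ∀ e ∈ E, u e ∈ RGBset n) (hv : ∀ e ∈ E, v e ∈ RGBset n)
    (hstep : ∀ e ∈ E, ∃ i p, v e = Function.update (u e) i p) :
    ∑ e ∈ E, gibbsFactor n β (u e) * (F (u e) - F (v e)) ^ 2 ≤
      3 * n * Real.exp (β * n) * energyRGB n β F := by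
  classical
  have hn0 : (0 : ℝ) < n := by exact_mod_cast hn
  have h1 : ∀ e ∈ E, gibbsFactor n β (u e) * (F (u e) - F (v e)) ^ 2 ≤
      3 * n * Real.exp (β * n) * (pottsProp n (u e) (v e) *
        min (gibbsFactor n β (u e)) (gibbsFactor n β (v e)) * (F (u e) - F (v e)) ^ 2) := by
    intro e he
    obtain ⟨i, p, hip⟩ := hstep e he
    have hQ : 1 / (n * 3 : ℝ) ≤ pottsProp n (u e) (v e) := by
      unfold pottsProp
      apply div_le_div_of_nonneg_right _ (by positivity)
      have : 0 < (univ.filter (fun vc : Fin n × Fin 3 =>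
          Function.update (u e) vc.1 vc.2 = v e)).card :=
        Finset.card_pos.mpr ⟨(i, p), by simp [hip]⟩
      exact_mod_cast this
    have hg : gibbsFactor n β (u e) ≤
        Real.exp (β * n) * min (gibbsFactor n β (u e)) (gibbsFactor n β (v e)) := by
      rw [mul_min_of_nonneg _ _ (Real.exp_pos _).le]
      refine le_min ?_ ?_
      · exact le_mul_of_one_le_left (gibbsFactor_pos n β _).le
          (Real.one_le_exp (by positivity))
      · have := pottsH_update_le n (u e) i p
        rw [← hip] at this
        have h' : (pottsH n (u e) : ℝ) ≤ pottsH n (v e) + n := by exact_mod_cast this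
        rw [gibbsFactor, gibbsFactor, ← Real.exp_add]
        apply Real.exp_le_exp.mpr
        nlinarith
    have hm : 0 ≤ min (gibbsFactor n β (u e)) (gibbsFactor n β (v e)) :=
      le_min (gibbsFactor_pos n β _).le (gibbsFactor_pos n β _).le
    calc gibbsFactor n β (u e) * (F (u e) - F (v e)) ^ 2
        ≤ (Real.exp (β * n) * min (gibbsFactor n β (u e)) (gibbsFactor n β (v e))) *
            (F (u e) - F (v e)) ^ 2 := mul_le_mul_of_nonneg_right hg (sq_nonneg _)
      _ = 3 * n * Real.exp (β * n) * (1 / (n * 3) *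
            min (gibbsFactor n β (u e)) (gibbsFactor n β (v e)) * (F (u e) - F (v e)) ^ 2) := by
          field_simp
      _ ≤ _ := by gcongr
  refine (Finset.sum_le_sum h1).trans ?_
  rw [← Finset.mul_sum]
  apply mul_le_mul_of_nonneg_left _ (by positivity)
  set Φ : (Fin n → Fin 3) × (Fin n → Fin 3) → ℝ := fun z => pottsProp n z.1 z.2 *
    min (gibbsFactor n β z.1) (gibbsFactor n β z.2) * (F z.1 - F z.2) ^ 2 with hΦ
  calc _ = ∑ z ∈ E.image (fun e => (u e, v e)), Φ z := (Finset.sum_image hinj).symm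
    _ ≤ ∑ z ∈ RGBset n ×ˢ RGBset n, Φ z := by
        apply Finset.sum_le_sum_of_subset_of_nonneg
        · intro z hz
          obtain ⟨e, he, rfl⟩ := Finset.mem_image.mp hz
          exact Finset.mem_product.mpr ⟨hu e he, hv e he⟩
        · intro z _ _; exact energyRGB_term_nonneg n β F _ _
    _ = energyRGB n β F := by rw [Finset.sum_product]; rfl

lemma sqrt_sum_sq_add_le {ι : Type} (E : Finset ι) (f g : ι → ℝ) :
    √(∑ e ∈ E, (f e + g e) ^ 2) ≤ √(∑ e ∈ E, f e ^ 2) + √(∑ e ∈ E, g e ^ 2) := by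
  apply Real.sqrt_le_iff.mpr
  refine ⟨by positivity, ?_⟩
  have h := Real.sum_mul_le_sqrt_mul_sqrt E f g
  have hf : 0 ≤ ∑ e ∈ E, f e ^ 2 := Finset.sum_nonneg fun _ _ => sq_nonneg _
  have hg : 0 ≤ ∑ e ∈ E, g e ^ 2 := Finset.sum_nonneg fun _ _ => sq_nonneg _
  rw [add_sq, Real.sq_sqrt hf, Real.sq_sqrt hg]
  have : ∑ e ∈ E, (f e + g e) ^ 2 =
      ∑ e ∈ E, f e ^ 2 + 2 * ∑ e ∈ E, f e * g e + ∑ e ∈ E, g e ^ 2 := by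
    rw [Finset.mul_sum, ← Finset.sum_add_distrib, ← Finset.sum_add_distrib]
    exact Finset.sum_congr rfl fun e _ => by ring
  rw [this]
  linarith

/-- Root mean square deviation of `F` from the constant `m` on the class with counts `σ`. -/
noncomputable def sliceDev (n : ℕ) (F : (Fin n → Fin 3) → ℝ) (m : ℝ) (σ : Fin 3 → ℕ) : ℝ :=
  √((∑ x ∈ colorSlice n σ, (F x - m) ^ 2) / (colorSlice n σ).card)

lemma sliceDev_nonneg (n : ℕ) (F : (Fin n → Fin 3) → ℝ) (m : ℝ) (σ : Fin 3 → ℕ) :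
    0 ≤ sliceDev n F m σ := Real.sqrt_nonneg _

lemma card_mul_sliceDev_sq (n : ℕ) (F : (Fin n → Fin 3) → ℝ) (m : ℝ) (σ : Fin 3 → ℕ) :
    (colorSlice n σ).card * sliceDev n F m σ ^ 2 = ∑ x ∈ colorSlice n σ, (F x - m) ^ 2 := by
  have hs : 0 ≤ ∑ x ∈ colorSlice n σ, (F x - m) ^ 2 := Finset.sum_nonneg fun _ _ => sq_nonneg _
  rw [sliceDev, Real.sq_sqrt (by positivity)]
  rcases Finset.eq_empty_or_nonempty (colorSlice n σ) with h | h
  · simp [h]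
  · have : 0 < ((colorSlice n σ).card : ℝ) := by exact_mod_cast h.card_pos
    field_simp

/-- A uniformly random recoloring between two adjacent classes has uniform marginals on both, so
Minkowski's inequality compares the two root mean square deviations. -/
lemma sliceDev_le_of_move (n : ℕ) (hn : 1 ≤ n) (β : ℝ) (hβ : 0 ≤ β) (F : (Fin n → Fin 3) → ℝ)
    (m : ℝ) {p q : Fin 3} {σ τ : Fin 3 → ℕ} (h : CountMove p q σ τ) (hq : 1 ≤ σ q)
    (hσ : colorSlice n σ ⊆ RGBset n) (hτ : colorSlice n τ ⊆ RGBset n) (g : ℝ)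
    (hg : ∀ x ∈ colorSlice n σ, gibbsFactor n β x = g) (hg0 : 0 < g)
    (hcard : 0 < (colorSlice n σ).card) :
    |sliceDev n F m σ - sliceDev n F m τ| ≤
      √(3 * n * Real.exp (β * n) * energyRGB n β F / ((colorSlice n σ).card * g)) := by
  have hC : (0 : ℝ) < (colorSlice n σ).card := by exact_mod_cast hcard
  have hq' : (1 : ℝ) ≤ σ q := by exact_mod_cast hq
  set E := recolorings n σ q with hE
  set A := 3 * n * Real.exp (β * n) * energyRGB n β F with hA
  set N : ℝ := σ q * (colorSlice n σ).card with hN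
  have hN0 : 0 < N := by positivity
  have hX : ∑ e ∈ E, (F e.1 - F (Function.update e.1 e.2 p)) ^ 2 ≤ A / g := by
    have := sum_increments_le n hn β hβ F E (fun e => e.1) (fun e => Function.update e.1 e.2 p)
      (by
        intro e he e' he' hee
        simp only [Prod.mk.injEq] at hee
        have m1 := (mem_recolorings.mp he).2
        have m2 := (mem_recolorings.mp he').2
        obtain ⟨h1, h2⟩ := hee
        rw [← h1] at h2 m2
        by_contra hne
        have hne' : e.2 ≠ e'.2 := fun h => hne (Prod.ext h1 h)
        have := congrFun h2 e.2
        rw [Function.update_self, Function.update_of_ne hne', m1] at this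
        exact h.1 this)
      (fun e he => hσ (mem_recolorings.mp he).1)
      (fun e he => hτ (update_mem_colorSlice h (mem_recolorings.mp he).1 (mem_recolorings.mp he).2))
      (fun e _ => ⟨e.2, p, rfl⟩)
    rw [le_div_iff₀ hg0, mul_comm, Finset.mul_sum]
    refine le_trans (le_of_eq ?_) this
    refine Finset.sum_congr rfl fun e he => ?_
    rw [hg e.1 (mem_recolorings.mp he).1]
  set X := ∑ e ∈ E, (F e.1 - F (Function.update e.1 e.2 p)) ^ 2 with hXd
  have e1 : √(∑ e ∈ E, (F e.1 - m) ^ 2) = √N * sliceDev n F m σ := by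
    rw [hE, sum_recolorings_fst n σ q (fun x => (F x - m) ^ 2), ← card_mul_sliceDev_sq,
      ← mul_assoc, Real.sqrt_mul hN0.le, Real.sqrt_sq (sliceDev_nonneg _ _ _ _)]
  have e2 : √(∑ e ∈ E, (F (Function.update e.1 e.2 p) - m) ^ 2) = √N * sliceDev n F m τ := by
    rw [hE, sum_recolorings n h (fun _ y => (F y - m) ^ 2),
      sum_recolorings_fst n τ p (fun x => (F x - m) ^ 2), ← card_mul_sliceDev_sq,
      ← mul_assoc, ← card_slice_move n h, Real.sqrt_mul hN0.le,
      Real.sqrt_sq (sliceDev_nonneg _ _ _ _)]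
  have t1 : √N * sliceDev n F m σ ≤ √N * sliceDev n F m τ + √X := by
    rw [← e1, ← e2]
    have := sqrt_sum_sq_add_le E (fun e => F (Function.update e.1 e.2 p) - m)
      (fun e => F e.1 - F (Function.update e.1 e.2 p))
    refine le_trans (le_of_eq ?_) this
    congr 1
    exact Finset.sum_congr rfl fun e _ => by ring
  have t2 : √N * sliceDev n F m τ ≤ √N * sliceDev n F m σ + √X := by
    rw [← e1, ← e2]
    have := sqrt_sum_sq_add_le E (fun e => F e.1 - m)
      (fun e => F (Function.update e.1 e.2 p) - F e.1)
    have e3 : ∑ e ∈ E, (F (Function.update e.1 e.2 p) - F e.1) ^ 2 = X :=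
      Finset.sum_congr rfl fun e _ => by ring
    rw [e3] at this
    refine le_trans (le_of_eq ?_) this
    congr 1
    exact Finset.sum_congr rfl fun e _ => by ring
  have hsN : 0 < √N := Real.sqrt_pos.mpr hN0
  have t3 : √N * |sliceDev n F m σ - sliceDev n F m τ| ≤ √X := by
    have habs : √N * |sliceDev n F m σ - sliceDev n F m τ| =
        |√N * (sliceDev n F m σ - sliceDev n F m τ)| := by rw [abs_mul, abs_of_pos hsN]
    rw [habs, mul_sub, abs_le]
    constructor <;> linarith
  rw [← le_div_iff₀' hsN] at t3
  refine t3.trans ?_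
  rw [← Real.sqrt_div' _ hN0.le]
  apply Real.sqrt_le_sqrt
  have hA0 : 0 ≤ A := by
    have := energyRGB_nonneg n β F
    positivity
  calc X / N ≤ A / g / N := by gcongr
    _ ≤ A / g / (colorSlice n σ).card := by
        apply div_le_div_of_nonneg_left (by positivity) hC
        rw [hN]; exact le_mul_of_one_le_left hC.le hq'
    _ = _ := by rw [div_div, mul_comm g]

/-! ### Variance inside one color class, by transpositions -/

lemma comp_perm_mem_colorSlice {n : ℕ} {σ : Fin 3 → ℕ} {x : Fin n → Fin 3}
    (hx : x ∈ colorSlice n σ) (g : Equiv.Perm (Fin n)) : x ∘ g ∈ colorSlice n σ := by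
  rw [mem_colorSlice] at *
  rw [← hx]
  funext r
  simp only [colorCount]
  refine Finset.card_bij' (fun i _ => g i) (fun i _ => g.symm i) ?_ ?_ ?_ ?_ <;> simp

lemma exists_perm_of_mem_colorSlice {n : ℕ} {σ : Fin 3 → ℕ} {x y : Fin n → Fin 3}
    (hx : x ∈ colorSlice n σ) (hy : y ∈ colorSlice n σ) : ∃ g : Equiv.Perm (Fin n), y = x ∘ g := by
  rw [mem_colorSlice] at hx hy
  have hc : ∀ r, Nonempty ({i // y i = r} ≃ {i // x i = r}) := by
    intro r
    refine ⟨Fintype.equivOfCardEq ?_⟩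
    rw [Fintype.card_subtype, Fintype.card_subtype]
    exact congrFun (hy.trans hx.symm) r
  exact ⟨Equiv.ofFiberEquiv (fun r => (hc r).some),
    funext fun i => (Equiv.ofFiberEquiv_map _ i).symm⟩

lemma sum_comp_perm (n : ℕ) (σ : Fin 3 → ℕ) (g : Equiv.Perm (Fin n)) (G : (Fin n → Fin 3) → ℝ) :
    ∑ x ∈ colorSlice n σ, G (x ∘ g) = ∑ x ∈ colorSlice n σ, G x := by
  refine Finset.sum_bij' (fun x _ => x ∘ g) (fun x _ => x ∘ g.symm) ?_ ?_ ?_ ?_ ?_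
  · intro x hx; exact comp_perm_mem_colorSlice hx g
  · intro x hx; exact comp_perm_mem_colorSlice hx g.symm
  · intro x _; funext i; simp
  · intro x _; funext i; simp
  · intro x _; rfl

/-- The `L²` displacement under a permutation is subadditive, and a permutation is a product of at
most `n` transpositions. -/
lemma perm_displacement_le (n : ℕ) (σ : Fin 3 → ℕ) (F : (Fin n → Fin 3) → ℝ) (B : ℝ)
    (hB : ∀ i j : Fin n, √(∑ x ∈ colorSlice n σ, (F x - F (x ∘ Equiv.swap i j)) ^ 2) ≤ B)
    (g : Equiv.Perm (Fin n)) :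
    √(∑ x ∈ colorSlice n σ, (F x - F (x ∘ g)) ^ 2) ≤ g.support.card * B := by
  induction hd : g.support.card using Nat.strong_induction_on generalizing g with
  | _ d ih =>
    subst hd
    by_cases hg : g = 1
    · subst hg; simp
    obtain ⟨i, hi⟩ : ∃ i, g i ≠ i := by
      by_contra hc; push Not at hc; exact hg (Equiv.ext hc)
    set t := Equiv.swap i (g i) with ht
    have hlt := Equiv.Perm.card_support_swap_mul hi
    set h : Equiv.Perm (Fin n) := t * g with hh
    have h1 := ih _ hlt h rfl
    have h2 := sqrt_sum_sq_add_le (colorSlice n σ) (fun x => F x - F (x ∘ t))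
      (fun x => F (x ∘ t) - F ((x ∘ t) ∘ h))
    have e1 : ∀ x : Fin n → Fin 3, (x ∘ t) ∘ h = x ∘ g := by
      intro x; funext j; simp [hh, ht]
    rw [sum_comp_perm n σ t (fun x => (F x - F (x ∘ h)) ^ 2)] at h2
    have e2 : ∑ x ∈ colorSlice n σ, (F x - F (x ∘ g)) ^ 2 = ∑ x ∈ colorSlice n σ,
        (F x - F (x ∘ t) + (F (x ∘ t) - F ((x ∘ t) ∘ h))) ^ 2 :=
      Finset.sum_congr rfl fun x _ => by rw [e1]; ring
    rw [e2]
    have hB0 : 0 ≤ B := (Real.sqrt_nonneg _).trans (hB i i)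
    have h3 := hB i (g i)
    have h4 : (h.support.card : ℝ) + 1 ≤ g.support.card := by exact_mod_cast hlt
    have h5 : ((h.support.card : ℝ) + 1) * B ≤ g.support.card * B :=
      mul_le_mul_of_nonneg_right h4 hB0
    linarith

/-- A function that varies little in `L²` under every transposition is `L²`-close to its average over
all rearrangements, which is constant on the class. -/
lemma exists_center_of_swap_bound (n : ℕ) (σ : Fin 3 → ℕ) (F : (Fin n → Fin 3) → ℝ) (B : ℝ)
    (hB : ∀ i j : Fin n, √(∑ x ∈ colorSlice n σ, (F x - F (x ∘ Equiv.swap i j)) ^ 2) ≤ B) :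
    ∃ m, ∑ x ∈ colorSlice n σ, (F x - m) ^ 2 ≤ (n * B) ^ 2 := by
  rcases Finset.eq_empty_or_nonempty (colorSlice n σ) with h | ⟨x0, hx0⟩
  · exact ⟨0, by rw [h, Finset.sum_empty]; positivity⟩
  set G := Fintype.card (Equiv.Perm (Fin n)) with hG
  have hG0 : (0 : ℝ) < G := by exact_mod_cast Fintype.card_pos
  -- the average over all rearrangements, the same for every configuration of the class
  refine ⟨(∑ g : Equiv.Perm (Fin n), F (x0 ∘ g)) / G, ?_⟩
  have hm : ∀ x ∈ colorSlice n σ, F x - (∑ g : Equiv.Perm (Fin n), F (x0 ∘ g)) / G =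
      (∑ g : Equiv.Perm (Fin n), (F x - F (x ∘ g))) / G := by
    intro x hx
    obtain ⟨h, rfl⟩ := exists_perm_of_mem_colorSlice hx0 hx
    have : ∑ g : Equiv.Perm (Fin n), F ((x0 ∘ h) ∘ g) = ∑ g : Equiv.Perm (Fin n), F (x0 ∘ g) :=
      Fintype.sum_equiv (Equiv.mulLeft h) _ _ (fun g => rfl)
    rw [Finset.sum_sub_distrib, this, sub_div]
    simp only [Finset.sum_const, Finset.card_univ, nsmul_eq_mul]
    rw [mul_div_cancel_left₀ _ hG0.ne']
  have hx : ∀ x ∈ colorSlice n σ, (F x - (∑ g : Equiv.Perm (Fin n), F (x0 ∘ g)) / G) ^ 2 ≤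
      (∑ g : Equiv.Perm (Fin n), (F x - F (x ∘ g)) ^ 2) / G := by
    intro x hx
    rw [hm x hx, div_pow, div_le_div_iff₀ (by positivity) hG0]
    have := sq_sum_le_card_mul_sum_sq (s := (univ : Finset (Equiv.Perm (Fin n))))
      (f := fun g => F x - F (x ∘ g))
    rw [Finset.card_univ] at this
    nlinarith
  refine (Finset.sum_le_sum hx).trans ?_
  rw [← Finset.sum_div, Finset.sum_comm, div_le_iff₀ hG0]
  have hB0 : ∀ i j : Fin n, 0 ≤ B := fun i j => (Real.sqrt_nonneg _).trans (hB i j)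
  have : ∀ g ∈ (univ : Finset (Equiv.Perm (Fin n))),
      ∑ x ∈ colorSlice n σ, (F x - F (x ∘ g)) ^ 2 ≤ (n * B) ^ 2 := by
    intro g _
    have h1 := perm_displacement_le n σ F B hB g
    have h2 : (g.support.card : ℝ) * B ≤ n * B := by
      rcases Nat.eq_zero_or_pos n with h0 | h0
      · subst h0
        have : g.support.card = 0 := by
          rw [Finset.card_eq_zero]; exact Subsingleton.elim _ _
        simp [this]
      · have : (g.support.card : ℝ) ≤ n := by
          exact_mod_cast (Finset.card_le_univ _).trans (by simp)
        exact mul_le_mul_of_nonneg_right this (hB0 ⟨0, h0⟩ ⟨0, h0⟩)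
    exact (Real.sqrt_le_left ((Real.sqrt_nonneg _).trans (h1.trans h2))).mp (h1.trans h2)
  refine (Finset.sum_le_sum this).trans ?_
  simp only [Finset.sum_const, Finset.card_univ, nsmul_eq_mul]
  rw [mul_comm]

lemma update_mem_RGBset_of_strict {n : ℕ} {a b c : ℕ} (hba : b < a) (hcb : c < b)
    {x : Fin n → Fin 3} (hx : x ∈ colorSlice n ![a, b, c]) (i : Fin n) (p : Fin 3)
    (hp : p ≤ x i) : Function.update x i p ∈ RGBset n := by
  rw [mem_colorSlice] at hx
  have h := colorCount_update n x i p
  rw [hx] at h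
  rw [mem_RGBset]
  have h0 := h 0
  have h1 := h 1
  have h2 := h 2
  generalize x i = q at *
  fin_cases p <;> fin_cases q <;> simp at * <;> omega

/-- The configuration obtained by giving the sites `i` and `j` the smaller of their two colors. It
differs from `x` in at most one site, and swapping the two colors first does not change it. -/
def mergeSites {n : ℕ} (i j : Fin n) (x : Fin n → Fin 3) : Fin n → Fin 3 :=
  if x i < x j then Function.update x j (x i) else Function.update x i (x j)

lemma mergeSites_swap {n : ℕ} (i j : Fin n) (x : Fin n → Fin 3) :
    mergeSites i j (x ∘ Equiv.swap i j) = mergeSites i j x := by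
  by_cases hij : i = j
  · subst hij; simp
  have hs : ∀ l, Equiv.swap i j l = if l = i then j else if l = j then i else l :=
    fun l => Equiv.swap_apply_def i j l
  funext l
  simp only [mergeSites, Function.comp, Equiv.swap_apply_left, Equiv.swap_apply_right]
  rcases lt_trichotomy (x i) (x j) with h | h | h
  · rw [if_neg (not_lt.mpr h.le), if_pos h]
    by_cases h1 : l = i <;> by_cases h2 : l = j <;> simp_all
  · rw [if_neg (not_lt.mpr h.le), if_neg (not_lt.mpr h.ge)]
    by_cases h1 : l = i <;> by_cases h2 : l = j <;> simp_all
  · rw [if_pos h, if_neg (not_lt.mpr h.le)]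
    by_cases h1 : l = i <;> by_cases h2 : l = j <;> simp_all

lemma mergeSites_eq_update {n : ℕ} (i j : Fin n) (x : Fin n → Fin 3) :
    ∃ l p, p ≤ x l ∧ mergeSites i j x = Function.update x l p := by
  unfold mergeSites
  split_ifs with h
  · exact ⟨j, x i, h.le, rfl⟩
  · exact ⟨i, x j, not_lt.mp h, rfl⟩

/-- On a class with strictly decreasing counts, a swap of two sites factors through two recolorings
that stay in `Ω_RGB`. -/
lemma swap_bound_of_strict (n : ℕ) (hn : 1 ≤ n) (β : ℝ) (hβ : 0 ≤ β) (F : (Fin n → Fin 3) → ℝ)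
    {a b c : ℕ} (hba : b < a) (hcb : c < b) (g : ℝ)
    (hg : ∀ x ∈ colorSlice n ![a, b, c], gibbsFactor n β x = g) (hg0 : 0 < g) (i j : Fin n) :
    ∑ x ∈ colorSlice n ![a, b, c], (F x - F (x ∘ Equiv.swap i j)) ^ 2 ≤
      4 * (3 * n * Real.exp (β * n) * energyRGB n β F / g) := by
  set A := 3 * n * Real.exp (β * n) * energyRGB n β F with hA
  have h1 : ∑ x ∈ colorSlice n ![a, b, c], (F x - F (mergeSites i j x)) ^ 2 ≤ A / g := by
    have := sum_increments_le n hn β hβ F (colorSlice n ![a, b, c]) (fun x => x)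
      (fun x => mergeSites i j x) (fun x _ y _ h => (Prod.mk.inj h).1)
      (fun x hx => by
        rw [mem_colorSlice] at hx
        rw [mem_RGBset, hx]
        exact ⟨hba.le, hcb.le⟩)
      (fun x hx => by
        obtain ⟨l, p, hp, hl⟩ := mergeSites_eq_update i j x
        rw [hl]
        exact update_mem_RGBset_of_strict hba hcb hx l p hp)
      (fun x _ => by
        obtain ⟨l, p, _, hl⟩ := mergeSites_eq_update i j x
        exact ⟨l, p, hl⟩)
    rw [le_div_iff₀ hg0, mul_comm, Finset.mul_sum]
    refine le_trans (le_of_eq ?_) this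
    exact Finset.sum_congr rfl fun x hx => by rw [hg x hx]
  have h2 := sum_comp_perm n ![a, b, c] (Equiv.swap i j)
    (fun x => (F x - F (mergeSites i j x)) ^ 2)
  have h3 : ∀ x ∈ colorSlice n ![a, b, c], (F x - F (x ∘ Equiv.swap i j)) ^ 2 ≤
      2 * (F x - F (mergeSites i j x)) ^ 2 +
      2 * (F (x ∘ Equiv.swap i j) - F (mergeSites i j (x ∘ Equiv.swap i j))) ^ 2 := by
    intro x _
    rw [mergeSites_swap]
    nlinarith [sq_nonneg ((F x - F (mergeSites i j x)) +
      (F (x ∘ Equiv.swap i j) - F (mergeSites i j x)))]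
  refine (Finset.sum_le_sum h3).trans ?_
  rw [Finset.sum_add_distrib, ← Finset.mul_sum, ← Finset.mul_sum, h2]
  linarith

/-- Inside a class with strictly decreasing counts, the deviation from a suitable constant is
controlled by the Dirichlet form, through transpositions. -/
lemma exists_center_of_strict (n : ℕ) (hn : 1 ≤ n) (β : ℝ) (hβ : 0 ≤ β)
    (F : (Fin n → Fin 3) → ℝ) {a b c : ℕ} (hba : b < a) (hcb : c < b) (g : ℝ)
    (hg : ∀ x ∈ colorSlice n ![a, b, c], gibbsFactor n β x = g) (hg0 : 0 < g) :
    ∃ m, sliceDev n F m ![a, b, c] ≤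
      2 * n * √(3 * n * Real.exp (β * n) * energyRGB n β F /
        ((colorSlice n ![a, b, c]).card * g)) := by
  set A := 3 * n * Real.exp (β * n) * energyRGB n β F with hA
  have hA0 : 0 ≤ A := by
    have := energyRGB_nonneg n β F
    positivity
  obtain ⟨m, hm⟩ := exists_center_of_swap_bound n ![a, b, c] F (√(4 * (A / g)))
    (fun i j => Real.sqrt_le_sqrt (swap_bound_of_strict n hn β hβ F hba hcb g hg hg0 i j))
  refine ⟨m, ?_⟩
  rw [mul_pow, Real.sq_sqrt (by positivity)] at hm
  rw [sliceDev]
  apply Real.sqrt_le_iff.mpr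
  refine ⟨by positivity, ?_⟩
  rw [mul_pow, Real.sq_sqrt (by positivity)]
  refine (div_le_div_of_nonneg_right hm (Nat.cast_nonneg _)).trans (le_of_eq ?_)
  rw [div_mul_eq_div_div_swap]
  ring

/-! ### The Poincaré inequality on `Ω_RGB` -/

/-- The Gibbs factor is constant on a color class, and its total over the class is the Potts weight
up to the common factor `exp (-β n / 2)`. -/
lemma exists_slice_gibbsFactor (n : ℕ) (β : ℝ) (a b c : ℕ) (hn : a + b + c = n) :
    ∃ g : ℝ, 0 < g ∧ (∀ x ∈ colorSlice n ![a, b, c], gibbsFactor n β x = g) ∧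
      0 < (colorSlice n ![a, b, c]).card ∧
      ((colorSlice n ![a, b, c]).card : ℝ) * g =
        Real.exp (-(β * n / 2)) * pottsWeight n β (a, b, c) := by
  have hcard : 0 < (colorSlice n ![a, b, c]).card := by
    subst hn
    have h := card_colorSlice a b c
    by_contra hc
    have h0 : (colorSlice (a + b + c) ![a, b, c]).card = 0 := by omega
    rw [h0] at h
    have : (0 : ℝ) < (a + b + c).factorial := by exact_mod_cast Nat.factorial_pos _
    simp only [Nat.cast_zero, zero_mul] at h
    linarith
  obtain ⟨x0, hx0⟩ := Finset.card_pos.mp hcard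
  refine ⟨gibbsFactor n β x0, gibbsFactor_pos n β x0, ?_, hcard,
    card_mul_exp_eq_pottsWeight n β a b c hn x0 hx0⟩
  intro x hx
  have h1 := two_pottsH n x
  have h2 := two_pottsH n x0
  rw [mem_colorSlice] at hx hx0
  rw [hx] at h1
  rw [hx0] at h2
  have : pottsH n x = pottsH n x0 := by omega
  rw [gibbsFactor, gibbsFactor, this]

lemma colorSlice_subset_RGBset (n : ℕ) {a b c : ℕ} (hba : b ≤ a) (hcb : c ≤ b) :
    colorSlice n ![a, b, c] ⊆ RGBset n := by
  intro x hx
  rw [mem_colorSlice] at hx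
  rw [mem_RGBset, hx]
  exact ⟨hba, hcb⟩

/-- The bound on one move of color counts, in terms of a lower bound `θ` on the weight of the
starting class. -/
lemma sliceDev_move_le (n : ℕ) (hn : 1 ≤ n) (β : ℝ) (hβ : 0 ≤ β) (F : (Fin n → Fin 3) → ℝ)
    (m : ℝ) {p q : Fin 3} {a b c a' b' c' : ℕ} (h : CountMove p q ![a, b, c] ![a', b', c'])
    (hq : 1 ≤ (![a, b, c] : Fin 3 → ℕ) q)
    (hsum : a + b + c = n) (hba : b ≤ a) (hcb : c ≤ b) (hba' : b' ≤ a') (hcb' : c' ≤ b')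
    (θ : ℝ) (hθ0 : 0 < θ) (hθ : θ ≤ pottsWeight n β (a, b, c)) :
    |sliceDev n F m ![a, b, c] - sliceDev n F m ![a', b', c']| ≤
      √(3 * n * Real.exp (β * n) * energyRGB n β F / (Real.exp (-(β * n / 2)) * θ)) := by
  obtain ⟨g, hg0, hg, hcard, hw⟩ := exists_slice_gibbsFactor n β a b c hsum
  refine (sliceDev_le_of_move n hn β hβ F m h hq (colorSlice_subset_RGBset n hba hcb)
    (colorSlice_subset_RGBset n hba' hcb') g hg hg0 hcard).trans ?_
  apply Real.sqrt_le_sqrt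
  rw [hw]
  have := energyRGB_nonneg n β F
  gcongr

lemma stepBound_sliceDev (n : ℕ) (hn : 1 ≤ n) (β : ℝ) (hβ : 0 ≤ β) (F : (Fin n → Fin 3) → ℝ)
    (m θ : ℝ) (hθ0 : 0 < θ) :
    StepBound n β θ
      (√(3 * n * Real.exp (β * n) * energyRGB n β F / (Real.exp (-(β * n / 2)) * θ)))
      (fun a b c => sliceDev n F m ![a, b, c]) := by
  refine ⟨?_, ?_, ?_⟩
  · intro a b c hs h1 h2 h
    have hm : CountMove 0 1 ![a, b + 1, c] ![a + 1, b, c] :=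
      ⟨by decide, fun r => by fin_cases r <;> simp⟩
    rcases h with h | h
    · exact sliceDev_move_le n hn β hβ F m hm (by simp) (by omega) (by omega) (by omega) (by omega)
        (by omega) θ hθ0 h
    · rw [abs_sub_comm]
      exact sliceDev_move_le n hn β hβ F m hm.symm (by simp) (by omega) (by omega) (by omega)
        (by omega) (by omega) θ hθ0 h
  · intro a b c hs h1 h2 h
    have hm : CountMove 2 1 ![a, b + 1, c] ![a, b, c + 1] :=
      ⟨by decide, fun r => by fin_cases r <;> simp⟩
    rcases h with h | h
    · exact sliceDev_move_le n hn β hβ F m hm (by simp) (by omega) (by omega) (by omega) (by omega)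
        (by omega) θ hθ0 h
    · rw [abs_sub_comm]
      exact sliceDev_move_le n hn β hβ F m hm.symm (by simp) (by omega) (by omega) (by omega)
        (by omega) (by omega) θ hθ0 h
  · intro a b c hs h1 h2 h
    have hm : CountMove 0 2 ![a, b, c + 1] ![a + 1, b, c] :=
      ⟨by decide, fun r => by fin_cases r <;> simp⟩
    rcases h with h | h
    · exact sliceDev_move_le n hn β hβ F m hm (by simp) (by omega) (by omega) (by omega) (by omega)
        (by omega) θ hθ0 h
    · rw [abs_sub_comm]
      exact sliceDev_move_le n hn β hβ F m hm.symm (by simp) (by omega) (by omega) (by omega)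
        (by omega) (by omega) θ hθ0 h

/-- The squared deviation of `F` on every ordered class from a constant attached to the root class,
which lies next to the maximum of the weight on the balanced line. -/
lemma exists_center_slices (k : ℕ) (hk : 3 ≤ k) (β : ℝ) (hβ : 0 < β)
    (jmin jmax : ℕ) (hjmax : jmax < k)
    (hmin : ∀ j ≤ k, diagWeight k β jmin ≤ diagWeight k β j)
    (hmax : ∀ j ≤ k, diagWeight k β j ≤ diagWeight k β jmax)
    (F : (Fin (3 * k) → Fin 3) → ℝ) :
    ∃ m, ∀ a b c : ℕ, a + b + c = 3 * k → b ≤ a → c ≤ b →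
      ∑ x ∈ colorSlice (3 * k) ![a, b, c], gibbsFactor (3 * k) β x * (F x - m) ^ 2 ≤
        49 * ((3 * k : ℕ) : ℝ) ^ 4 *
          (((3 * k : ℕ) + 1) * (diagWeight k β 0 / diagWeight k β jmin)) *
          (3 * (3 * k : ℕ) * Real.exp (β * (3 * k : ℕ)) * energyRGB (3 * k) β F) := by
  have hn1 : 1 ≤ 3 * k := by omega
  obtain ⟨g, hg0, hg, hcard, hw⟩ := exists_slice_gibbsFactor (3 * k) β (k + 2 * jmax + 1)
    (k - jmax) (k - jmax - 1) (by omega)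
  obtain ⟨m, hm⟩ := exists_center_of_strict (3 * k) hn1 β hβ.le F
    (a := k + 2 * jmax + 1) (b := k - jmax) (c := k - jmax - 1) (by omega) (by omega) g hg hg0
  rw [hw] at hm
  refine ⟨m, fun a b c hsum hba hcb => ?_⟩
  obtain ⟨g', hg0', hg', hcard', hw'⟩ := exists_slice_gibbsFactor (3 * k) β a b c hsum
  have hE := energyRGB_nonneg (3 * k) β F
  generalize hnn : (3 * k : ℕ) = n at *
  have hn : (1 : ℝ) ≤ n := by exact_mod_cast hn1
  set A := 3 * n * Real.exp (β * n) * energyRGB n β F with hA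
  have hA0 : 0 ≤ A := by positivity
  set κ := Real.exp (-(β * n / 2)) with hκ
  have hκ0 : 0 < κ := Real.exp_pos _
  set R := diagWeight k β 0 / diagWeight k β jmin with hR
  have hR0 : 0 < R := div_pos (diagWeight_pos _ _ _) (diagWeight_pos _ _ _)
  set w := pottsWeight n β (a, b, c) with hwd
  have hw0 : 0 < w := pottsWeight_pos _ _ _
  set wr := pottsWeight n β (k + 2 * jmax + 1, k - jmax, k - jmax - 1) with hwr
  have hwr0 : 0 < wr := pottsWeight_pos _ _ _
  set D : ℝ := ((n : ℝ) + 1) * R with hD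
  have hD0 : 0 < D := by positivity
  set θ := w / D with hθ
  have hθ0 : 0 < θ := by positivity
  set δ := √(A / (κ * θ)) with hδ
  have hδ0 : 0 ≤ δ := Real.sqrt_nonneg _
  have hpath := path_to_root k hk β θ δ hβ hδ0 (fun a b c => sliceDev n F m ![a, b, c])
    (by rw [hnn]; exact stepBound_sliceDev n hn1 β hβ.le F m θ hθ0) jmin jmax hjmax hmin hmax
    a b c (by omega) hba hcb (by rw [hnn]; exact div_mul_cancel₀ _ hD0.ne')
  rw [hnn] at hpath
  obtain ⟨hp1, hp2⟩ := hpath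
  have hroot : √(A / (κ * wr)) ≤ (n + 1) * δ := by
    apply Real.sqrt_le_iff.mpr
    refine ⟨by positivity, ?_⟩
    rw [mul_pow, hδ, Real.sq_sqrt (by positivity)]
    calc A / (κ * wr) = (n + 1) * (A / (κ * ((n + 1) * wr))) := by field_simp
      _ ≤ (n + 1) * (A / (κ * θ)) := by gcongr
      _ ≤ (n + 1) ^ 2 * (A / (κ * θ)) := by
          have : 0 ≤ A / (κ * θ) := by positivity
          apply mul_le_mul_of_nonneg_right _ this
          nlinarith
  have hdev : sliceDev n F m ![a, b, c] ≤ 7 * n ^ 2 * δ := by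
    have h1 : 2 * n * √(A / (κ * wr)) ≤ 2 * n * ((n + 1) * δ) := by gcongr
    have h2 : (2 * n * (n + 1) + 3 * n) * δ ≤ 7 * n ^ 2 * δ := by
      apply mul_le_mul_of_nonneg_right _ hδ0
      nlinarith
    linarith
  have hsq : sliceDev n F m ![a, b, c] ^ 2 ≤ 49 * n ^ 4 * (A / (κ * θ)) := by
    have := pow_le_pow_left₀ (sliceDev_nonneg n F m ![a, b, c]) hdev 2
    refine this.trans (le_of_eq ?_)
    rw [mul_pow, hδ, Real.sq_sqrt (by positivity)]
    ring
  calc ∑ x ∈ colorSlice n ![a, b, c], gibbsFactor n β x * (F x - m) ^ 2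
      = g' * ∑ x ∈ colorSlice n ![a, b, c], (F x - m) ^ 2 := by
        rw [Finset.mul_sum]
        exact Finset.sum_congr rfl fun x hx => by rw [hg' x hx]
    _ = κ * w * sliceDev n F m ![a, b, c] ^ 2 := by
        rw [← card_mul_sliceDev_sq, ← hw']; ring
    _ ≤ κ * w * (49 * n ^ 4 * (A / (κ * θ))) := by gcongr
    _ = 49 * n ^ 4 * D * A := by rw [hθ]; field_simp

/-- The unnormalized Poincaré inequality: at most `(n + 1)³` classes, each with the bound of
`exists_center_slices`. -/
lemma poincare_RGB (k : ℕ) (hk : 3 ≤ k) (β : ℝ) (hβ : 0 < β)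
    (jmin jmax : ℕ) (hjmax : jmax < k)
    (hmin : ∀ j ≤ k, diagWeight k β jmin ≤ diagWeight k β j)
    (hmax : ∀ j ≤ k, diagWeight k β j ≤ diagWeight k β jmax)
    (F : (Fin (3 * k) → Fin 3) → ℝ) :
    ∃ m, ∑ x ∈ RGBset (3 * k), gibbsFactor (3 * k) β x * (F x - m) ^ 2 ≤
        (((3 * k : ℕ) : ℝ) + 1) ^ 3 * (49 * ((3 * k : ℕ) : ℝ) ^ 4 *
          (((3 * k : ℕ) + 1) * (diagWeight k β 0 / diagWeight k β jmin)) *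
          (3 * (3 * k : ℕ) * Real.exp (β * (3 * k : ℕ)) * energyRGB (3 * k) β F)) := by
  obtain ⟨m, hm⟩ := exists_center_slices k hk β hβ jmin jmax hjmax hmin hmax F
  refine ⟨m, ?_⟩
  have hE := energyRGB_nonneg (3 * k) β F
  have hR0 : 0 < diagWeight k β 0 / diagWeight k β jmin :=
    div_pos (diagWeight_pos _ _ _) (diagWeight_pos _ _ _)
  generalize hnn : (3 * k : ℕ) = n at *
  set T := range (n + 1) ×ˢ range (n + 1) ×ˢ range (n + 1) with hT
  set f : (Fin n → Fin 3) → ℕ × ℕ × ℕ :=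
    fun x => (colorCount n x 0, colorCount n x 1, colorCount n x 2) with hf
  have hmaps : ∀ x ∈ RGBset n, f x ∈ T := by
    intro x _
    have := sum_colorCount n x
    rw [Fin.sum_univ_three] at this
    simp only [hT, hf, Finset.mem_product, Finset.mem_range]
    omega
  rw [← Finset.sum_fiberwise_of_maps_to hmaps]
  have hbound : ∀ σ ∈ T, ∑ x ∈ (RGBset n).filter (fun x => f x = σ),
      gibbsFactor n β x * (F x - m) ^ 2 ≤ 49 * (n : ℝ) ^ 4 *
          ((n + 1) * (diagWeight k β 0 / diagWeight k β jmin)) *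
          (3 * n * Real.exp (β * n) * energyRGB n β F) := by
    rintro ⟨a, b, c⟩ _
    rcases Finset.eq_empty_or_nonempty ((RGBset n).filter (fun x => f x = (a, b, c))) with h | h
    · rw [h, Finset.sum_empty]; positivity
    · obtain ⟨x0, hx0⟩ := h
      rw [Finset.mem_filter, mem_RGBset] at hx0
      obtain ⟨⟨h1, h2⟩, h3⟩ := hx0
      simp only [hf, Prod.mk.injEq] at h3
      have hs := sum_colorCount n x0
      rw [Fin.sum_univ_three] at hs
      refine le_trans ?_ (hm a b c (by omega) (by omega) (by omega))
      apply Finset.sum_le_sum_of_subset_of_nonneg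
      · intro x hx
        rw [Finset.mem_filter] at hx
        have h4 := hx.2
        simp only [hf, Prod.mk.injEq] at h4
        rw [mem_colorSlice]
        funext r
        fin_cases r
        · exact h4.1
        · exact h4.2.1
        · exact h4.2.2
      · intro x _ _
        exact mul_nonneg (gibbsFactor_pos _ _ _).le (sq_nonneg _)
  refine (Finset.sum_le_card_nsmul T _ _ hbound).trans (le_of_eq ?_)
  rw [nsmul_eq_mul, hT]
  simp only [Finset.card_product, Finset.card_range]
  push_cast
  ring

/-! ### The Metropolis chain on `Ω_RGB` -/

lemma card_update_eq_comm (n : ℕ) (x y : Fin n → Fin 3) :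
    (univ.filter (fun e : Fin n × Fin 3 => Function.update x e.1 e.2 = y)).card ≤
      (univ.filter (fun e : Fin n × Fin 3 => Function.update y e.1 e.2 = x)).card := by
  refine Finset.card_le_card_of_injOn (fun e => (e.1, x e.1)) ?_ ?_
  · intro e he
    simp only [Finset.coe_filter, Finset.mem_univ, true_and, Set.mem_ofPred_eq] at he ⊢
    rw [← he, Function.update_idem, Function.update_eq_self]
  · intro e he e' he' h
    simp only [Finset.coe_filter, Finset.mem_univ, true_and, Set.mem_ofPred_eq] at he he'
    have h1 : e.1 = e'.1 := (Prod.mk.inj h).1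
    refine Prod.ext h1 ?_
    have h2 : y e.1 = e.2 := by rw [← he, Function.update_self]
    have h3 : y e'.1 = e'.2 := by rw [← he', Function.update_self]
    rw [← h2, ← h3, h1]

lemma pottsProp_comm (n : ℕ) (x y : Fin n → Fin 3) : pottsProp n x y = pottsProp n y x := by
  unfold pottsProp
  rw [le_antisymm (card_update_eq_comm n x y) (card_update_eq_comm n y x)]

lemma sum_pottsProp (n : ℕ) (hn : 1 ≤ n) (x : Fin n → Fin 3) : ∑ y, pottsProp n x y = 1 := by
  unfold pottsProp
  rw [← Finset.sum_div, ← Nat.cast_sum,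
    ← Finset.card_eq_sum_card_fiberwise (f := fun e : Fin n × Fin 3 => Function.update x e.1 e.2)
      (s := univ) (t := univ) (by simp)]
  have : (n : ℝ) ≠ 0 := by positivity
  simp only [Finset.card_univ, Fintype.card_prod, Fintype.card_fin]
  push_cast
  field_simp

/-- The proposal holds with probability at least `1/3`, since the proposed color may be the old
one. -/
lemma pottsProp_self (n : ℕ) (hn : 1 ≤ n) (x : Fin n → Fin 3) : 1 / 3 ≤ pottsProp n x x := by
  unfold pottsProp
  have h : n ≤ (univ.filter
      (fun e : Fin n × Fin 3 => Function.update x e.1 e.2 = x)).card := by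
    have := Finset.card_le_card_of_injOn (s := (univ : Finset (Fin n)))
      (t := univ.filter (fun e : Fin n × Fin 3 => Function.update x e.1 e.2 = x))
      (fun i => (i, x i)) (by intro i _; simp) (fun i _ j _ h => (Prod.mk.inj h).1)
    simpa using this
  have h' : (n : ℝ) ≤ (univ.filter
      (fun e : Fin n × Fin 3 => Function.update x e.1 e.2 = x)).card := by exact_mod_cast h
  have hn0 : (0 : ℝ) < n := by exact_mod_cast hn
  rw [div_le_div_iff₀ (by norm_num) (by positivity)]
  linarith

/-- General facts on a Metropolis chain with a symmetric, lazy proposal kernel. -/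
lemma metropolis_facts {S : Type} [Fintype S] [DecidableEq S] (Q : S → S → ℝ) (π : S → ℝ)
    (hQ : ∀ x y, 0 ≤ Q x y) (hQc : ∀ x y, Q x y = Q y x) (hQs : ∀ x, ∑ y, Q x y ≤ 1)
    (hQd : ∀ x, 1 / 3 ≤ Q x x) (hπ : ∀ x, 0 < π x) :
    (∀ x y, 0 ≤ metropolis Q π x y) ∧ (∀ x, ∑ y, metropolis Q π x y = 1) ∧
      (∀ y, ∑ x, π x * metropolis Q π x y = π y) ∧ (∀ x, 1 / 3 ≤ metropolis Q π x x) ∧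
      (∀ x y, x ≠ y → π x * metropolis Q π x y = Q x y * min (π x) (π y)) := by
  have hd : ∀ x, 1 / 3 ≤ metropolis Q π x x := by
    intro x
    simp only [metropolis, Matrix.of_apply, if_true]
    have h1 : ∑ z ∈ univ.erase x, Q x z * min 1 (π z / π x) ≤ ∑ z ∈ univ.erase x, Q x z :=
      Finset.sum_le_sum fun z _ => mul_le_of_le_one_right (hQ x z) (min_le_left _ _)
    have h2 := Finset.add_sum_erase univ (Q x) (mem_univ x)
    have h3 := hQs x
    have h4 := hQd x
    linarith
  have ho : ∀ x y, x ≠ y → metropolis Q π x y = Q x y * min 1 (π y / π x) := by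
    intro x y h
    simp only [metropolis, Matrix.of_apply, if_neg h.symm]
  have hrow : ∀ x, ∑ y, metropolis Q π x y = 1 := by
    intro x
    rw [← Finset.add_sum_erase univ _ (mem_univ x),
      Finset.sum_congr rfl (fun y hy => ho x y (Finset.ne_of_mem_erase hy).symm)]
    simp only [metropolis, Matrix.of_apply, if_true]
    ring
  have hb : ∀ x y, x ≠ y → π x * metropolis Q π x y = Q x y * min (π x) (π y) := by
    intro x y h
    rw [ho x y h, mul_left_comm, mul_min_of_nonneg _ _ (hπ x).le, mul_one,
      mul_div_cancel₀ _ (hπ x).ne']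
  have hrev : ∀ x y, π x * metropolis Q π x y = π y * metropolis Q π y x := by
    intro x y
    by_cases h : x = y
    · rw [h]
    · rw [hb x y h, hb y x (Ne.symm h), hQc, min_comm]
  refine ⟨?_, hrow, ?_, hd, hb⟩
  · intro x y
    by_cases h : x = y
    · rw [← h]; linarith [hd x]
    · rw [ho x y h]
      exact mul_nonneg (hQ x y) (le_min zero_le_one (div_pos (hπ y) (hπ x)).le)
  · intro y
    rw [Finset.sum_congr rfl (fun x _ => hrev x y), ← Finset.mul_sum, hrow, mul_one]

/-- The partition function of `Ω_RGB`. -/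
noncomputable def partitionRGB (n : ℕ) (β : ℝ) : ℝ := ∑ x ∈ RGBset n, gibbsFactor n β x

lemma RGBset_nonempty (n : ℕ) : (RGBset n).Nonempty := by
  refine ⟨fun _ => 0, ?_⟩
  rw [mem_RGBset]
  simp [colorCount]

lemma partitionRGB_pos (n : ℕ) (β : ℝ) : 0 < partitionRGB n β :=
  Finset.sum_pos (fun x _ => gibbsFactor_pos n β x) (RGBset_nonempty n)

lemma gibbsRGB_eq (n : ℕ) (β : ℝ) (x : ↥(RGBset n)) :
    gibbsRGB n β x = gibbsFactor n β x / partitionRGB n β := by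
  unfold gibbsRGB partitionRGB gibbsFactor
  rw [Finset.sum_coe_sort (RGBset n) (fun y => Real.exp (β * pottsH n y))]

lemma gibbsRGB_pos (n : ℕ) (β : ℝ) (x : ↥(RGBset n)) : 0 < gibbsRGB n β x := by
  rw [gibbsRGB_eq]; exact div_pos (gibbsFactor_pos _ _ _) (partitionRGB_pos _ _)

lemma sum_gibbsRGB (n : ℕ) (β : ℝ) : ∑ x, gibbsRGB n β x = 1 := by
  simp only [gibbsRGB_eq]
  rw [← Finset.sum_div, Finset.sum_coe_sort (RGBset n) (fun y => gibbsFactor n β y)]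
  exact div_self (partitionRGB_pos n β).ne'

lemma exp_neg_le_gibbsRGB (n : ℕ) (hn : 1 ≤ n) (μ : ℝ) (hμ : 0 < μ) (x : ↥(RGBset n)) :
    Real.exp (-(n * (2 + μ))) ≤ gibbsRGB n (μ / n) x := by
  have hn0 : (0 : ℝ) < n := by exact_mod_cast hn
  rw [gibbsRGB_eq, le_div_iff₀ (partitionRGB_pos _ _)]
  have h1 : (1 : ℝ) ≤ gibbsFactor n (μ / n) x := Real.one_le_exp (by positivity)
  have h2 : ∀ y ∈ RGBset n, gibbsFactor n (μ / n) y ≤ Real.exp (μ * n) := by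
    intro y _
    apply Real.exp_le_exp.mpr
    have : (pottsH n y : ℝ) ≤ n ^ 2 := by exact_mod_cast pottsH_le n y
    calc μ / n * pottsH n y ≤ μ / n * n ^ 2 := by gcongr
      _ = μ * n := by field_simp
  have h3 : partitionRGB n (μ / n) ≤ 3 ^ n * Real.exp (μ * n) := by
    refine (Finset.sum_le_card_nsmul _ _ _ h2).trans ?_
    rw [nsmul_eq_mul]
    apply mul_le_mul_of_nonneg_right _ (Real.exp_pos _).le
    have : (RGBset n).card ≤ 3 ^ n := (Finset.card_le_univ _).trans (by simp)
    exact_mod_cast this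
  have h4 : (3 : ℝ) ^ n ≤ Real.exp (2 * n) := by
    rw [mul_comm, Real.exp_nat_mul]
    apply pow_le_pow_left₀ (by norm_num)
    linarith [Real.add_one_le_exp (2 : ℝ)]
  calc Real.exp (-(n * (2 + μ))) * partitionRGB n (μ / n)
      ≤ Real.exp (-(n * (2 + μ))) * (Real.exp (2 * n) * Real.exp (μ * n)) := by
        refine mul_le_mul_of_nonneg_left (h3.trans ?_) (Real.exp_pos _).le
        exact mul_le_mul_of_nonneg_right h4 (Real.exp_pos _).le
    _ = 1 := by
        rw [← Real.exp_add, ← Real.exp_add, Real.exp_eq_one_iff]; ring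
    _ ≤ _ := h1

lemma metropolisRGB_facts (n : ℕ) (hn : 1 ≤ n) (β : ℝ) :
    (∀ x y, 0 ≤ metropolis (propRGB n) (gibbsRGB n β) x y) ∧
      (∀ x, ∑ y, metropolis (propRGB n) (gibbsRGB n β) x y = 1) ∧
      (∀ y, ∑ x, gibbsRGB n β x * metropolis (propRGB n) (gibbsRGB n β) x y = gibbsRGB n β y) ∧
      (∀ x, 1 / 3 ≤ metropolis (propRGB n) (gibbsRGB n β) x x) ∧
      (∀ x y, x ≠ y → gibbsRGB n β x * metropolis (propRGB n) (gibbsRGB n β) x y =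
        propRGB n x y * min (gibbsRGB n β x) (gibbsRGB n β y)) := by
  refine metropolis_facts _ _ (fun x y => pottsProp_nonneg _ _ _) (fun x y => pottsProp_comm _ _ _)
    (fun x => ?_) (fun x => pottsProp_self n hn _) (gibbsRGB_pos n β)
  rw [← sum_pottsProp n hn x]
  simp only [propRGB]
  rw [Finset.sum_coe_sort (RGBset n) (fun y => pottsProp n x y)]
  exact Finset.sum_le_sum_of_subset_of_nonneg (Finset.subset_univ _)
    (fun y _ _ => pottsProp_nonneg _ _ _)

/-- The normalized Dirichlet form of the Metropolis chain. -/
lemma dirichlet_metropolisRGB (n : ℕ) (hn : 1 ≤ n) (β : ℝ) (f : ↥(RGBset n) → ℝ)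
    (F : (Fin n → Fin 3) → ℝ) (hF : ∀ x : ↥(RGBset n), F x = f x) :
    ∑ x, ∑ y, gibbsRGB n β x * metropolis (propRGB n) (gibbsRGB n β) x y * (f x - f y) ^ 2 =
      energyRGB n β F / partitionRGB n β := by
  have hZ := partitionRGB_pos n β
  have hb := (metropolisRGB_facts n hn β).2.2.2.2
  unfold energyRGB
  rw [Finset.sum_div, ← Finset.sum_coe_sort (RGBset n)]
  refine Finset.sum_congr rfl fun x _ => ?_
  rw [← Finset.sum_coe_sort (RGBset n), Finset.sum_div]
  refine Finset.sum_congr rfl fun y _ => ?_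
  rw [hF x, hF y]
  by_cases h : x = y
  · subst h; simp
  · rw [hb x y h, gibbsRGB_eq, gibbsRGB_eq, min_div_div_right hZ.le, propRGB]
    ring

lemma poincare_metropolisRGB (k : ℕ) (hk : 3 ≤ k) (β : ℝ) (hβ : 0 < β)
    (jmin jmax : ℕ) (hjmax : jmax < k)
    (hmin : ∀ j ≤ k, diagWeight k β jmin ≤ diagWeight k β j)
    (hmax : ∀ j ≤ k, diagWeight k β j ≤ diagWeight k β jmax)
    (f : ↥(RGBset (3 * k)) → ℝ) :
    ∃ m, ∑ x, gibbsRGB (3 * k) β x * (f x - m) ^ 2 ≤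
      (((3 * k : ℕ) : ℝ) + 1) ^ 3 * (49 * ((3 * k : ℕ) : ℝ) ^ 4 *
          (((3 * k : ℕ) + 1) * (diagWeight k β 0 / diagWeight k β jmin)) *
          (3 * (3 * k : ℕ) * Real.exp (β * (3 * k : ℕ)))) *
        ∑ x, ∑ y, gibbsRGB (3 * k) β x *
          metropolis (propRGB (3 * k)) (gibbsRGB (3 * k) β) x y * (f x - f y) ^ 2 := by
  classical
  set F : (Fin (3 * k) → Fin 3) → ℝ := fun x => if h : x ∈ RGBset (3 * k) then f ⟨x, h⟩ else 0
    with hFd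
  have hF : ∀ x : ↥(RGBset (3 * k)), F x = f x := fun x => by simp [hFd]
  obtain ⟨m, hm⟩ := poincare_RGB k hk β hβ jmin jmax hjmax hmin hmax F
  refine ⟨m, ?_⟩
  have hZ := partitionRGB_pos (3 * k) β
  rw [dirichlet_metropolisRGB (3 * k) (by omega) β f F hF]
  have : ∑ x, gibbsRGB (3 * k) β x * (f x - m) ^ 2 =
      (∑ x ∈ RGBset (3 * k), gibbsFactor (3 * k) β x * (F x - m) ^ 2) / partitionRGB (3 * k) β := by
    rw [← Finset.sum_coe_sort (RGBset (3 * k)), Finset.sum_div]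
    refine Finset.sum_congr rfl fun x _ => ?_
    rw [hF x, gibbsRGB_eq]
    ring
  rw [this, ← mul_div_assoc]
  apply div_le_div_of_nonneg_right _ hZ.le
  refine hm.trans (le_of_eq ?_)
  ring

/-- for every `μ > 4·ln 2` there are `c > 0` and `N` such that for all
`n ≥ N` divisible by 6, with `β* = μ/n`, the Metropolis chain on `Ω_RGB` at `β*` has
mixing time at most
`n^c·(w_{β*}(n/3,n/3,n/3)/w_{β*}(t_min,(n−t_min)/2,(n−t_min)/2))·(1 + ln(1/ε))` for all
`ε ∈ (0,1)`, where `t_min` minimizes `t ↦ w_{β*}(t,(n−t)/2,(n−t)/2)` over integers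
`n/3 ≤ t ≤ n` with `n − t` even. -/
theorem metropolis_RGB_mixing_upper_bound :
    ∀ μ : ℝ, 4 * Real.log 2 < μ → ∃ c : ℝ, 0 < c ∧ ∃ N : ℕ,
      ∀ n : ℕ, N ≤ n → 6 ∣ n → ∀ tmin : ℕ, tmin ∈ tCandidates n →
        (∀ t ∈ tCandidates n,
          pottsWeight n (μ / n) (tmin, (n - tmin) / 2, (n - tmin) / 2) ≤
            pottsWeight n (μ / n) (t, (n - t) / 2, (n - t) / 2)) →
        ∀ ε : ℝ, 0 < ε → ε < 1 →
          (mixingTime (metropolis (propRGB n) (gibbsRGB n (μ / n)))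
              (gibbsRGB n (μ / n)) ε : ℝ) ≤
            (n : ℝ) ^ c *
              (pottsWeight n (μ / n) (n / 3, n / 3, n / 3) /
                pottsWeight n (μ / n) (tmin, (n - tmin) / 2, (n - tmin) / 2)) *
              (1 + Real.log (1 / ε)) := by
  intro μ hμ4
  have hμ : 0 < μ := lt_trans (by positivity) hμ4
  set C := 7057 * Real.exp μ * (2 + μ) with hC
  refine ⟨(11 : ℕ), by norm_num, ⌈C⌉₊ + ⌈Real.exp (2 * μ)⌉₊ + 10, ?_⟩
  rintro n hN ⟨i, rfl⟩ tmin htmin hminw ε hε hε1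
  have hCn : C ≤ ((6 * i : ℕ) : ℝ) :=
    (Nat.le_ceil C).trans (by exact_mod_cast (by omega : ⌈C⌉₊ ≤ 6 * i))
  have hexp : Real.exp (2 * μ) < ((6 * i : ℕ) : ℝ) :=
    (Nat.le_ceil _).trans_lt (by exact_mod_cast (by omega : ⌈Real.exp (2 * μ)⌉₊ < 6 * i))
  obtain ⟨k, hk⟩ : ∃ k, k = 2 * i := ⟨_, rfl⟩
  have hn : 6 * i = 3 * k := by omega
  have hn3 : 3 * k / 3 = k := by omega
  rw [hn] at hCn hexp htmin hminw ⊢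
  simp only [tCandidates, Finset.mem_filter, Finset.mem_Icc, hn3] at htmin hminw
  -- the candidates `t` are the numbers `k + 2 j` with `j ≤ k`, because `k` is even
  obtain ⟨jmin, hjmin, rfl⟩ : ∃ j, j ≤ k ∧ tmin = k + 2 * j :=
    ⟨(tmin - k) / 2, by omega, by omega⟩
  have hhalf : ∀ j, j ≤ k → (3 * k - (k + 2 * j)) / 2 = k - j := fun j hj => by omega
  have hmin : ∀ j ≤ k, diagWeight k (μ / (3 * k : ℕ)) jmin ≤ diagWeight k (μ / (3 * k : ℕ)) j := by
    intro j hj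
    have := hminw (k + 2 * j) (by omega)
    rwa [hhalf jmin hjmin, hhalf j hj] at this
  rw [hhalf jmin hjmin, hn3]
  have hw0 : pottsWeight (3 * k) (μ / (3 * k : ℕ)) (k, k, k) =
      diagWeight k (μ / (3 * k : ℕ)) 0 := rfl
  have hwm : pottsWeight (3 * k) (μ / (3 * k : ℕ)) (k + 2 * jmin, k - jmin, k - jmin) =
      diagWeight k (μ / (3 * k : ℕ)) jmin := rfl
  rw [hw0, hwm]
  obtain ⟨jmax, hjm, hmax'⟩ := Finset.exists_max_image (range (k + 1))
    (diagWeight k (μ / (3 * k : ℕ))) ⟨0, by simp⟩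
  have hmax : ∀ j ≤ k, diagWeight k (μ / (3 * k : ℕ)) j ≤ diagWeight k (μ / (3 * k : ℕ)) jmax :=
    fun j hj => hmax' j (by simp; omega)
  have hjmax : jmax < k := by
    have hle : jmax ≤ k := by simp at hjm; omega
    refine lt_of_le_of_ne hle ?_
    rintro rfl
    have h1 := diagWeight_last_lt jmax μ hμ (by omega) (by exact_mod_cast hexp)
    exact absurd (hmax (jmax - 1) (by omega)) (not_le.mpr h1)
  set R := diagWeight k (μ / (3 * k : ℕ)) 0 / diagWeight k (μ / (3 * k : ℕ)) jmin with hR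
  have hR1 : 1 ≤ R := by
    rw [hR, one_le_div (diagWeight_pos _ _ _)]; exact hmin 0 (by omega)
  have hn1 : 1 ≤ 3 * k := by omega
  have hr1 : (1 : ℝ) ≤ (3 * k : ℕ) := by exact_mod_cast hn1
  have hβ : 0 < μ / (3 * k : ℕ) := by positivity
  obtain ⟨f1, f2, f3, f4, -⟩ := metropolisRGB_facts (3 * k) hn1 (μ / (3 * k : ℕ))
  have hpoin := poincare_metropolisRGB k (by omega) _ hβ jmin jmax hjmax hmin hmax
  rw [div_mul_cancel₀ _ (by positivity), ← hR] at hpoin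
  have hexp1 : 1 ≤ Real.exp μ := Real.one_le_exp hμ.le
  generalize hr : ((3 * k : ℕ) : ℝ) = r at *
  set K := (r + 1) ^ 3 * (49 * r ^ 4 * ((r + 1) * R) * (3 * r * Real.exp μ)) with hK
  have hK1 : 1 ≤ K := by
    rw [hK]
    have a1 : 1 ≤ (r + 1) ^ 3 := one_le_pow₀ (by linarith)
    have a2 : 1 ≤ 49 * r ^ 4 := by
      have := one_le_pow₀ hr1 (n := 4)
      linarith
    have a3 : 1 ≤ (r + 1) * R := one_le_mul_of_one_le_of_one_le (by linarith) hR1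
    have a4 : 1 ≤ 3 * r * Real.exp μ := one_le_mul_of_one_le_of_one_le (by linarith) hexp1
    exact one_le_mul_of_one_le_of_one_le a1 (one_le_mul_of_one_le_of_one_le
      (one_le_mul_of_one_le_of_one_le a2 a3) a4)
  have hmix := mixingTime_le_of_poincare _ _ (gibbsRGB_pos (3 * k) (μ / r))
    (sum_gibbsRGB _ _) f1 f2 f3 f4 K hK1 hpoin (r * (2 + μ)) (by positivity)
    (fun x => by rw [← hr]; exact exp_neg_le_gibbsRGB (3 * k) hn1 μ hμ x) ε hε hε1
  refine hmix.trans ?_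
  have hL : 0 ≤ Real.log (1 / ε) := Real.log_nonneg (by rw [one_div]; exact (one_le_inv₀ hε).mpr hε1.le)
  generalize Real.log (1 / ε) = L at *
  rw [Real.rpow_natCast]
  have hKle : K ≤ 2352 * r ^ 9 * Real.exp μ * R := by
    calc K ≤ (2 * r) ^ 3 * (49 * r ^ 4 * ((2 * r) * R) * (3 * r * Real.exp μ)) := by
          rw [hK]; gcongr <;> linarith
      _ = 2352 * r ^ 9 * Real.exp μ * R := by ring
  have hLle : 2 * L + r * (2 + μ) ≤ r * (2 + μ) * (1 + L) := by
    have : 2 ≤ r * (2 + μ) := by nlinarith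
    nlinarith
  have h1le : 1 ≤ r ^ 10 * Real.exp μ * (2 + μ) * R * (1 + L) := by
    have a1 : 1 ≤ r ^ 10 := one_le_pow₀ hr1
    exact one_le_mul_of_one_le_of_one_le (one_le_mul_of_one_le_of_one_le
      (one_le_mul_of_one_le_of_one_le (one_le_mul_of_one_le_of_one_le a1 hexp1) (by linarith)) hR1)
      (by linarith)
  calc 3 * K * (2 * L + r * (2 + μ)) + 1
      ≤ 3 * (2352 * r ^ 9 * Real.exp μ * R) * (r * (2 + μ) * (1 + L)) +
          r ^ 10 * Real.exp μ * (2 + μ) * R * (1 + L) := by gcongr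
    _ = C * (r ^ 10 * R * (1 + L)) := by rw [hC]; ring
    _ ≤ r * (r ^ 10 * R * (1 + L)) := by gcongr
    _ = r ^ 11 * R * (1 + L) := by ring
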